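/- arXiv:1703.00630 — 3 statements merged into one kernel-verified Lean document; each statement's English description precedes it below -/
import Mathlib

section
/- Let p : [0,π] → ℝ be integrable and bounded, and for each ω ∈ ℂ let y(·;ω) : [0,π] → ℂ be the solution of −y'' + p·y = ω²·y on (0,π) with initial conditions y(0;ω) = 0 and y'(0;ω) = 1. Then the map ω ↦ y(π;ω) is an entire function of ω, i.e., it is complex analytic on all of ℂ. -/
/-!
The difference quotients `(y ω - y ω₀) / (ω - ω₀)` satisfy the Cauchy criterion as `ω → ω₀`, so
`ω ↦ y(π; ω)` is complex differentiable at every `ω₀`, hence entire. The solution of the variational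
equation, i.e. the derivative itself, never has to be constructed: completeness of `ℂ` provides it.

The one analytic input is the stability estimate `norm_le_of_forced`: if `u'' = g`,
`u(0) = u'(0) = 0` and `‖g‖ ≤ M ‖u‖ + ε`, then `‖u‖ ≤ C ε` on `[0,π]` with `C` depending only on
`M`. It is used twice.
* The difference `u = y ω - y ω₀` satisfies `u'' = (p - ω²) u - (ω² - ω₀²) y ω₀`, which gives
  `‖y ω - y ω₀‖ ≤ L ‖ω - ω₀‖` uniformly on `[0,π]` (`exists_lipschitz`).
* The difference `u` of the quotients at `a` and `b` satisfies
  `u'' = (p - ω₀²) u - ((a + ω₀) y a - (b + ω₀) y b)`, and by the first step the forcing term is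
  `O(‖a - ω₀‖ + ‖b - ω₀‖)` (`exists_slope_sub_le`).
-/

open Real MeasureTheory

/-- `IsSLSolution p ω y y'` says that `y : [0,π] → ℂ` solves the initial value problem
`−y'' + p y = ω² y`, `y 0 = 0`, `y' 0 = 1`, in the sense that `y` is continuously
differentiable on `[0,π]` with derivative `y'`, and `y'` satisfies the integrated
equation `y' x = 1 + ∫_0^x (p t − ω²) y t dt` (so `y'` is absolutely continuous with
`(y')' = (p − ω²) y` almost everywhere, and `y' 0 = 1`). -/
def IsSLSolution (p : ℝ → ℝ) (ω : ℂ) (y yd : ℝ → ℂ) : Prop :=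
  y 0 = 0 ∧
  (∀ x ∈ Set.Icc (0 : ℝ) Real.pi,
      HasDerivWithinAt y (yd x) (Set.Icc (0 : ℝ) Real.pi) x) ∧
  ∀ x ∈ Set.Icc (0 : ℝ) Real.pi,
    yd x = 1 + ∫ t in (0 : ℝ)..x, ((p t : ℂ) - ω ^ 2) * y t

/-- The constant in the stability estimate on `[0,π]` for `u'' = g` with `‖g‖ ≤ M ‖u‖ + ε`. -/
noncomputable def stabConst (M : ℝ) : ℝ := (Real.exp ((M + 1) * Real.pi) - 1) / (M + 1)

lemma stabConst_nonneg {M : ℝ} (hM : 0 ≤ M) : 0 ≤ stabConst M := by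
  have : 1 ≤ Real.exp ((M + 1) * Real.pi) := Real.one_le_exp (by positivity)
  exact div_nonneg (by linarith) (by linarith)

/-- Stability of the forced second order equation `u'' = g` with zero initial data. Only `u`, and
not `u' = ∫ g`, is differentiable everywhere, so Grönwall's inequality is applied to the pair
`(u, G)` with `G x = ∫₀ˣ (M ‖u‖ + ε)`, which dominates `‖u'‖` and is continuously
differentiable. -/
lemma norm_le_of_forced {M ε : ℝ} (hM : 0 ≤ M) (hε : 0 ≤ ε) {u g : ℝ → ℂ} (u0 : u 0 = 0)
    (hu : ∀ x ∈ Set.Icc (0 : ℝ) Real.pi,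
      HasDerivWithinAt u (∫ t in (0 : ℝ)..x, g t) (Set.Icc (0 : ℝ) Real.pi) x)
    (hg : ∀ t ∈ Set.Icc (0 : ℝ) Real.pi, ‖g t‖ ≤ M * ‖u t‖ + ε) :
    ∀ x ∈ Set.Icc (0 : ℝ) Real.pi, ‖u x‖ ≤ stabConst M * ε := by
  have huc : ContinuousOn u (Set.Icc 0 Real.pi) := fun x hx => (hu x hx).continuousWithinAt
  set k : ℝ → ℝ := fun t => M * ‖u t‖ + ε with hk
  have hkc : ContinuousOn k (Set.Icc 0 Real.pi) := by
    simp only [hk]; fun_prop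
  have hki : ∀ x ∈ Set.Icc (0 : ℝ) Real.pi, IntervalIntegrable k volume 0 x := fun x hx =>
    (hkc.mono (by rw [Set.uIcc_of_le hx.1]; exact Set.Icc_subset_Icc_right hx.2)).intervalIntegrable
  have hkn : ∀ t, 0 ≤ k t := fun t => by simp only [hk]; positivity
  set G : ℝ → ℝ := fun x => ∫ t in (0 : ℝ)..x, k t with hG
  have hGd : ∀ x ∈ Set.Icc (0 : ℝ) Real.pi,
      HasDerivWithinAt G (k x) (Set.Icc (0 : ℝ) Real.pi) x := by
    intro x hx
    have : Fact (x ∈ Set.Icc (0 : ℝ) Real.pi) := ⟨hx⟩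
    exact intervalIntegral.integral_hasDerivWithinAt_right (hki x hx)
      (hkc.stronglyMeasurableAtFilter_nhdsWithin measurableSet_Icc x) (hkc x hx)
  have hvG : ∀ x ∈ Set.Icc (0 : ℝ) Real.pi, ‖∫ t in (0 : ℝ)..x, g t‖ ≤ G x := by
    intro x hx
    refine intervalIntegral.norm_integral_le_of_norm_le hx.1 ?_ (hki x hx)
    exact Filter.Eventually.of_forall fun t ht => hg t ⟨ht.1.le, ht.2.trans hx.2⟩
  have key : ∀ x ∈ Set.Icc (0 : ℝ) Real.pi,
      ‖(u x, G x)‖ ≤ gronwallBound 0 (M + 1) ε (x - 0) := by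
    refine norm_le_gronwallBound_of_norm_deriv_right_le (f := fun x => (u x, G x))
      (f' := fun x => (∫ t in (0 : ℝ)..x, g t, k x)) ?_ ?_ ?_ ?_
    · exact huc.prodMk fun x hx => (hGd x hx).continuousWithinAt
    · intro x hx
      have hx' : x ∈ Set.Icc (0 : ℝ) Real.pi := ⟨hx.1, hx.2.le⟩
      refine ((hu x hx').prodMk (hGd x hx')).mono_of_mem_nhdsWithin ?_
      exact Icc_mem_nhdsGE_of_mem hx
    · simp [u0, hG]
    · intro x hx
      have h1 := hvG x ⟨hx.1, hx.2.le⟩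
      have h2 : ‖u x‖ ≤ ‖(u x, G x)‖ := norm_fst_le (u x, G x)
      have h3 : ‖G x‖ ≤ ‖(u x, G x)‖ := norm_snd_le (u x, G x)
      have h4 : G x ≤ ‖G x‖ := Real.le_norm_self _
      have h5 := mul_le_mul_of_nonneg_left h2 hM
      have h6 := mul_nonneg hM (norm_nonneg (u x, G x))
      refine max_le ?_ ?_
      · change ‖∫ t in (0 : ℝ)..x, g t‖ ≤ _
        nlinarith
      · change ‖k x‖ ≤ _
        rw [Real.norm_of_nonneg (hkn x)]
        simp only [hk]
        nlinarith [norm_nonneg (u x, G x)]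
  intro x hx
  have hM1 : 0 < M + 1 := by linarith
  calc ‖u x‖ ≤ ‖(u x, G x)‖ := norm_fst_le (u x, G x)
    _ ≤ gronwallBound 0 (M + 1) ε (x - 0) := key x hx
    _ ≤ gronwallBound 0 (M + 1) ε Real.pi :=
        gronwallBound_mono le_rfl hε hM1.le (by linarith [hx.2])
    _ = stabConst M * ε := by
        rw [gronwallBound_of_K_ne_0 hM1.ne', stabConst]; ring

lemma IsSLSolution.continuousOn {p : ℝ → ℝ} {ω : ℂ} {y yd : ℝ → ℂ} (h : IsSLSolution p ω y yd) :
    ContinuousOn y (Set.Icc 0 Real.pi) :=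
  fun x hx => (h.2.1 x hx).continuousWithinAt

lemma IsSLSolution.intervalIntegrable {p : ℝ → ℝ} {ω : ℂ} {y yd : ℝ → ℂ}
    (h : IsSLSolution p ω y yd) (hp_int : IntegrableOn p (Set.Icc (0 : ℝ) Real.pi)) {x : ℝ}
    (hx : x ∈ Set.Icc (0 : ℝ) Real.pi) :
    IntervalIntegrable (fun t => ((p t : ℂ) - ω ^ 2) * y t) volume 0 x := by
  have hsub : Set.uIcc 0 x ⊆ Set.Icc 0 Real.pi := by
    rw [Set.uIcc_of_le hx.1]; exact Set.Icc_subset_Icc_right hx.2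
  refine IntervalIntegrable.mul_continuousOn ?_ (h.continuousOn.mono hsub)
  refine IntervalIntegrable.sub ?_ intervalIntegrable_const
  exact (IntegrableOn.mono_set (s := Set.uIcc 0 x) hp_int.ofReal hsub).intervalIntegrable

/-- The difference of two solutions has zero initial data, since both have slope `1` at `0`. -/
lemma IsSLSolution.hasDerivWithinAt_sub {p : ℝ → ℝ} {a b : ℂ} {y z yd zd : ℝ → ℂ}
    (hy : IsSLSolution p a y yd) (hz : IsSLSolution p b z zd)
    (hp_int : IntegrableOn p (Set.Icc (0 : ℝ) Real.pi)) {x : ℝ}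
    (hx : x ∈ Set.Icc (0 : ℝ) Real.pi) :
    HasDerivWithinAt (fun x => y x - z x)
      (∫ t in (0 : ℝ)..x, (((p t : ℂ) - a ^ 2) * y t - ((p t : ℂ) - b ^ 2) * z t))
      (Set.Icc (0 : ℝ) Real.pi) x := by
  have h := (hy.2.1 x hx).sub (hz.2.1 x hx)
  rw [hy.2.2 x hx, hz.2.2 x hx] at h
  rw [intervalIntegral.integral_sub (hy.intervalIntegrable hp_int hx)
    (hz.intervalIntegrable hp_int hx)]
  rwa [add_sub_add_left_eq_sub] at h

lemma norm_potential_sub_le {p B : ℝ} (hp : |p| ≤ B) {ω ω₀ : ℂ} (hω : ‖ω - ω₀‖ ≤ 1) :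
    ‖(p : ℂ) - ω ^ 2‖ ≤ B + (‖ω₀‖ + 1) ^ 2 := by
  have h1 : ‖ω‖ ≤ ‖ω₀‖ + 1 := by
    have := norm_add_le ω₀ (ω - ω₀)
    rw [add_sub_cancel] at this
    linarith
  calc ‖(p : ℂ) - ω ^ 2‖ ≤ ‖(p : ℂ)‖ + ‖ω ^ 2‖ := norm_sub_le _ _
    _ ≤ B + (‖ω₀‖ + 1) ^ 2 := by
      rw [norm_pow, Complex.norm_real]
      gcongr
      exact hp

lemma norm_add_le_of_near {ω ω₀ : ℂ} (hω : ‖ω - ω₀‖ ≤ 1) : ‖ω + ω₀‖ ≤ 2 * ‖ω₀‖ + 1 := by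
  calc ‖ω + ω₀‖ = ‖(ω - ω₀) + 2 * ω₀‖ := by congr 1; ring
    _ ≤ ‖ω - ω₀‖ + ‖2 * ω₀‖ := norm_add_le _ _
    _ ≤ 2 * ‖ω₀‖ + 1 := by rw [norm_mul, Complex.norm_ofNat]; linarith

/-- Local Lipschitz dependence of the solution on `ω`, uniformly on `[0,π]`. -/
lemma exists_lipschitz {p : ℝ → ℝ} (hp_int : IntegrableOn p (Set.Icc (0 : ℝ) Real.pi)) {B : ℝ}
    (hB : ∀ x ∈ Set.Icc (0 : ℝ) Real.pi, |p x| ≤ B) {y yd : ℂ → ℝ → ℂ}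
    (hy : ∀ ω : ℂ, IsSLSolution p ω (y ω) (yd ω)) (ω₀ : ℂ) :
    ∃ L, 0 ≤ L ∧ ∀ ω, ‖ω - ω₀‖ ≤ 1 → ∀ x ∈ Set.Icc (0 : ℝ) Real.pi,
      ‖y ω x - y ω₀ x‖ ≤ L * ‖ω - ω₀‖ := by
  have hB0 : 0 ≤ B := (abs_nonneg _).trans (hB 0 ⟨le_rfl, Real.pi_pos.le⟩)
  obtain ⟨S, hS⟩ := isCompact_Icc.exists_bound_of_continuousOn (hy ω₀).continuousOn
  have hS0 : 0 ≤ S := (norm_nonneg _).trans (hS 0 ⟨le_rfl, Real.pi_pos.le⟩)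
  set M := B + (‖ω₀‖ + 1) ^ 2 with hM
  have hM0 : 0 ≤ M := by positivity
  have hC := stabConst_nonneg hM0
  refine ⟨stabConst M * ((2 * ‖ω₀‖ + 1) * S), by positivity, fun ω hω x hx => ?_⟩
  have := norm_le_of_forced hM0 (ε := (2 * ‖ω₀‖ + 1) * S * ‖ω - ω₀‖) (by positivity)
    (u := fun x => y ω x - y ω₀ x) (by simp [(hy _).1])
    (fun x hx => (hy ω).hasDerivWithinAt_sub (hy ω₀) hp_int hx) ?_ x hx
  · linarith
  intro t ht
  calc ‖((p t : ℂ) - ω ^ 2) * y ω t - ((p t : ℂ) - ω₀ ^ 2) * y ω₀ t‖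
      = ‖((p t : ℂ) - ω ^ 2) * (y ω t - y ω₀ t) - (ω + ω₀) * y ω₀ t * (ω - ω₀)‖ := by
        congr 1; ring
    _ ≤ ‖(p t : ℂ) - ω ^ 2‖ * ‖y ω t - y ω₀ t‖ + ‖ω + ω₀‖ * ‖y ω₀ t‖ * ‖ω - ω₀‖ := by
        refine (norm_sub_le _ _).trans_eq ?_
        simp only [norm_mul]
    _ ≤ M * ‖y ω t - y ω₀ t‖ + (2 * ‖ω₀‖ + 1) * S * ‖ω - ω₀‖ := by
        gcongr
        · exact norm_potential_sub_le (hB t ht) hω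
        · exact norm_add_le_of_near hω
        · exact hS t ht

/-- The Cauchy estimate for the difference quotients of `ω ↦ y(π; ω)` at `ω₀`. -/
lemma exists_slope_sub_le {p : ℝ → ℝ} (hp_int : IntegrableOn p (Set.Icc (0 : ℝ) Real.pi)) {B : ℝ}
    (hB : ∀ x ∈ Set.Icc (0 : ℝ) Real.pi, |p x| ≤ B) {y yd : ℂ → ℝ → ℂ}
    (hy : ∀ ω : ℂ, IsSLSolution p ω (y ω) (yd ω)) (ω₀ : ℂ) :
    ∃ L, 0 ≤ L ∧ ∀ a b, a ≠ ω₀ → b ≠ ω₀ → ‖a - ω₀‖ ≤ 1 → ‖b - ω₀‖ ≤ 1 →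
      ‖slope (fun ω => y ω Real.pi) ω₀ a - slope (fun ω => y ω Real.pi) ω₀ b‖
        ≤ L * (‖a - ω₀‖ + ‖b - ω₀‖) := by
  obtain ⟨L, hL0, hL⟩ := exists_lipschitz hp_int hB hy ω₀
  have hB0 : 0 ≤ B := (abs_nonneg _).trans (hB 0 ⟨le_rfl, Real.pi_pos.le⟩)
  obtain ⟨S, hS⟩ := isCompact_Icc.exists_bound_of_continuousOn (hy ω₀).continuousOn
  have hS0 : 0 ≤ S := (norm_nonneg _).trans (hS 0 ⟨le_rfl, Real.pi_pos.le⟩)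
  set M := B + (‖ω₀‖ + 1) ^ 2 with hM
  have hM0 : 0 ≤ M := by positivity
  have hC := stabConst_nonneg hM0
  refine ⟨stabConst M * ((2 * ‖ω₀‖ + 1) * L + S), by positivity, fun a b ha hb ha1 hb1 => ?_⟩
  have ha' := sub_ne_zero.2 ha
  have hb' := sub_ne_zero.2 hb
  have := norm_le_of_forced hM0 (ε := ((2 * ‖ω₀‖ + 1) * L + S) * (‖a - ω₀‖ + ‖b - ω₀‖))
    (by positivity)
    (u := fun x => (a - ω₀)⁻¹ * (y a x - y ω₀ x) - (b - ω₀)⁻¹ * (y b x - y ω₀ x))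
    (g := fun t =>
      (a - ω₀)⁻¹ * (((p t : ℂ) - a ^ 2) * y a t - ((p t : ℂ) - ω₀ ^ 2) * y ω₀ t)
      - (b - ω₀)⁻¹ * (((p t : ℂ) - b ^ 2) * y b t - ((p t : ℂ) - ω₀ ^ 2) * y ω₀ t))
    (by simp [(hy _).1]) ?_ ?_ Real.pi ⟨Real.pi_pos.le, le_rfl⟩
  · simp only [slope_def_module, smul_eq_mul]
    linarith
  · intro x hx
    have hi := fun ω => (hy ω).intervalIntegrable hp_int hx
    rw [intervalIntegral.integral_sub (((hi a).sub (hi ω₀)).const_mul _)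
      (((hi b).sub (hi ω₀)).const_mul _), intervalIntegral.integral_const_mul,
      intervalIntegral.integral_const_mul]
    exact (((hy a).hasDerivWithinAt_sub (hy ω₀) hp_int hx).const_mul _).sub
      (((hy b).hasDerivWithinAt_sub (hy ω₀) hp_int hx).const_mul _)
  · intro t ht
    calc _ = ‖((p t : ℂ) - ω₀ ^ 2) *
            ((a - ω₀)⁻¹ * (y a t - y ω₀ t) - (b - ω₀)⁻¹ * (y b t - y ω₀ t))
          - ((a + ω₀) * (y a t - y ω₀ t) - (b + ω₀) * (y b t - y ω₀ t)
            + ((a - ω₀) - (b - ω₀)) * y ω₀ t)‖ := by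
          congr 1; field_simp; ring
      _ ≤ ‖(p t : ℂ) - ω₀ ^ 2‖ *
            ‖(a - ω₀)⁻¹ * (y a t - y ω₀ t) - (b - ω₀)⁻¹ * (y b t - y ω₀ t)‖
          + (‖a + ω₀‖ * ‖y a t - y ω₀ t‖ + ‖b + ω₀‖ * ‖y b t - y ω₀ t‖
            + (‖a - ω₀‖ + ‖b - ω₀‖) * ‖y ω₀ t‖) := by
          simp only [← norm_mul]
          refine (norm_sub_le _ _).trans (add_le_add le_rfl ((norm_add_le _ _).trans
            (add_le_add (norm_sub_le _ _) ?_)))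
          rw [norm_mul]
          gcongr
          exact norm_sub_le _ _
      _ ≤ M * ‖(a - ω₀)⁻¹ * (y a t - y ω₀ t) - (b - ω₀)⁻¹ * (y b t - y ω₀ t)‖
          + ((2 * ‖ω₀‖ + 1) * (L * ‖a - ω₀‖) + (2 * ‖ω₀‖ + 1) * (L * ‖b - ω₀‖)
            + (‖a - ω₀‖ + ‖b - ω₀‖) * S) := by
          gcongr
          · exact norm_potential_sub_le (hB t ht) (by simp)
          · exact norm_add_le_of_near ha1
          · exact hL a ha1 t ht
          · exact norm_add_le_of_near hb1
          · exact hL b hb1 t ht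
          · exact hS t ht
      _ = _ := by ring

/-- For an integrable bounded potential `p` on `[0,π]`, the map `ω ↦ y(π;ω)`, where
`y(·;ω)` solves `-y'' + p y = ω² y`, `y 0 = 0`, `y' 0 = 1`, is an entire function of `ω`. -/
theorem sl_solution_entire
    (p : ℝ → ℝ)
    (hp_int : IntegrableOn p (Set.Icc (0 : ℝ) Real.pi))
    (hp_bdd : ∃ B : ℝ, ∀ x ∈ Set.Icc (0 : ℝ) Real.pi, |p x| ≤ B)
    (y yd : ℂ → ℝ → ℂ)
    (hy : ∀ ω : ℂ, IsSLSolution p ω (y ω) (yd ω)) :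
    AnalyticOnNhd ℂ (fun ω : ℂ => y ω Real.pi) Set.univ := by
  obtain ⟨B, hB⟩ := hp_bdd
  suffices h : Differentiable ℂ (fun ω : ℂ => y ω Real.pi) from
    h.differentiableOn.analyticOnNhd isOpen_univ
  intro ω₀
  obtain ⟨L, hL0, hL⟩ := exists_slope_sub_le hp_int hB hy ω₀
  have hc : Cauchy (Filter.map (slope (fun ω : ℂ => y ω Real.pi) ω₀) (nhdsWithin ω₀ {ω₀}ᶜ)) := by
    refine Metric.cauchy_iff.2 ⟨inferInstance, fun ε hε => ?_⟩
    set δ := min 1 (ε / (2 * L + 1)) with hδ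
    have hδ0 : 0 < δ := by positivity
    refine ⟨_, Filter.image_mem_map (Filter.inter_mem self_mem_nhdsWithin
      (mem_nhdsWithin_of_mem_nhds (Metric.ball_mem_nhds ω₀ hδ0))), ?_⟩
    rintro _ ⟨a, ⟨ha, haδ⟩, rfl⟩ _ ⟨b, ⟨hb, hbδ⟩, rfl⟩
    rw [mem_ball_iff_norm] at haδ hbδ
    have hδ1 : δ ≤ 1 := min_le_left _ _
    have hδ2 : δ * (2 * L + 1) ≤ ε := (le_div_iff₀ (by positivity)).1 (min_le_right _ _)
    rw [dist_eq_norm]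
    have h1 := hL a b ha hb (haδ.le.trans hδ1) (hbδ.le.trans hδ1)
    have h2 : L * (‖a - ω₀‖ + ‖b - ω₀‖) ≤ L * (δ + δ) := by gcongr
    linarith
  obtain ⟨d, hd⟩ := CompleteSpace.complete hc
  exact (hasDerivAt_iff_tendsto_slope.2 hd).differentiableAt
end

section
/- Let M ≥ 3 be odd and let p : [0,π] → ℝ be of the form p(x) = Σ_{m=0}^{M} p_m(x) + r_M(x), where r_M ∈ C^M[0,π], p_0(x) = Σ_{k=1}^{K_0} c_{0,k} · 1_{[x_{0,k},∞)}(x), and for m ≥ 1, p_m(x) = Σ_{k=1}^{K_m} c_{m,k} · 1_{[x_{m,k},∞)}(x) · (x − x_{m,k})^m / m!, with real coefficients c_{m,k} ≠ 0 and singular points x_{m,k} ∈ (0, π/2) that are pairwise distinct; let J be the total number of singular points and let 0 =: ω_0 < ω_1 < ω_2 < … < ω_J < ω_{J+1} := π/2 be their increasing rearrangement together with the endpoints 0 and π/2. For each ω ∈ ℂ let y(·;ω) be the solution of −y'' + p·y = ω²·y with y(0;ω) = 0, y'(0;ω) = 1, and let Z ⊂ ℝ be the set of real zeros of ω ↦ y(π;ω).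 Set d_l := ω_l − ω_{l−1} for l = 1, …, J+1 and d_l := d_{2J+3−l} for l = J+2, …, 2J+2. Then there exist 2J+2 families (z^{(l)}_{n})_{n ∈ ℤ} of elements of Z, for l = 1, …, 2J+2, and a constant C > 0, such that | z^{(l)}_{n} − nπ/d_l | ≤ C for all n ∈ ℤ and all l, and the union over l of the families (z^{(l)}_{n}) exhausts all of Z (with the correct multiplicity: every element of Z occurs among the z^{(l)}_{n}). -/
/-!
The gaps `d_l` of the theorem satisfy `∑ d_l = π`, so the progressions `n π / d_l` have total
density one, which is also the density of the zeros of `s ↦ y(π; s)` on the real line. The proof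
shows that both point sets have counting functions with bounded error and matches them.

*Zeros.* The potential is bounded and right-continuous, so for real `s` the real part of `y` solves
`u' = v`, `v' = (p - s²) u` with right derivatives at every point (`RightSol`), and the imaginary
part vanishes. Variation of constants and Grönwall's inequality give `s u(s, x) = sin(s x) + o(1)`
uniformly in `x` (`RightSol.asymp`), and Grönwall's inequality gives continuity in `s`. Hence for
large `|n|` there is a sign change of `s u(s, π)` between `n - 1/2` and `n + 1/2`
(`exists_zero_near`). Uniqueness of the zero there uses orthogonality of Dirichlet eigenfunctions:
two zeros near `n` have scaled eigenfunctions close to `sin(n x)`, so the integral of their product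
is close to `π / 2` and cannot vanish (`zeros_round_inj`). The same argument around an arbitrary
parameter shows that zeros are locally finite (`zeros_finite`).

*Matching.* The zeros therefore embed in `ℤ` with bounded displacement (`exists_injOn_int`). With
`δ_l = d_l / π`, the overlaps of `(δ_l k, δ_l (k + 1)]` with `(n, n + 1]` form a fractional matching
between `ℤ` and the index pairs `(l, n)`, and Hall's theorem provides an injection `k ↦ (l, n)` with
`n / δ_l = k + O(1)` (`exists_injective_progressions`). Composing the two injections assigns to
every zero its own index; the remaining indices receive any nearby zero (`exists_families`).
-/

open Real MeasureTheory

/-! ### The firstorder system and Grönwall estimates -/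

/-- `(u, v)` solves the first order system `u' = v`, `v' = (p - s²) u` on `[0, π]` for the real
spectral parameter `s`. Only derivatives from the right are required: since the potential
is right-continuous, the second equation then holds at every point, its jumps included. -/
structure RightSol (p : ℝ → ℝ) (s : ℝ) (u v : ℝ → ℝ) : Prop where
  contU : ContinuousOn u (Set.Icc 0 π)
  contV : ContinuousOn v (Set.Icc 0 π)
  derivU : ∀ x ∈ Set.Ico 0 π, HasDerivWithinAt u (v x) (Set.Ici x) x
  derivV : ∀ x ∈ Set.Ico 0 π, HasDerivWithinAt v ((p x - s ^ 2) * u x) (Set.Ici x) x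

lemma gronwallBound_zero_le {K ε x : ℝ} (hK : 1 ≤ K) (hε : 0 ≤ ε) (hx : x ≤ π) :
    gronwallBound 0 K ε x ≤ ε * exp (K * π) := by
  rw [gronwallBound_of_K_ne_0 (by positivity)]
  have h1 : exp (K * x) ≤ exp (K * π) := exp_le_exp.2 (by gcongr)
  have h2 : ε / K ≤ ε := div_le_self hε hK
  have h3 : 0 ≤ exp (K * x) := (exp_pos _).le
  have h4 : 0 ≤ ε / K := by positivity
  simp only [zero_mul, zero_add]
  calc ε / K * (exp (K * x) - 1) ≤ ε / K * exp (K * π) := by gcongr; linarith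
    _ ≤ _ := by gcongr

/-- Continuous dependence on the spectral parameter, by Grönwall's inequality. -/
lemma RightSol.dist_le {p : ℝ → ℝ} {P s t S M a b : ℝ} {u v u' v' : ℝ → ℝ}
    (hP : ∀ x ∈ Set.Icc 0 π, |p x| ≤ P) (h : RightSol p s u v) (h' : RightSol p t u' v')
    (hu0 : u 0 = a) (hu0' : u' 0 = a) (hv0 : v 0 = b) (hv0' : v' 0 = b) (hs : |s| ≤ S)
    (hM : ∀ x ∈ Set.Icc 0 π, |u' x| ≤ M) {x : ℝ} (hx : x ∈ Set.Icc 0 π) :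
    |u x - u' x| ≤ |s ^ 2 - t ^ 2| * M * exp ((1 + P + S ^ 2) * π) := by
  have hP0 : 0 ≤ P := (abs_nonneg _).trans (hP x hx)
  have hM0 : 0 ≤ M := (abs_nonneg _).trans (hM x hx)
  have key := norm_le_gronwallBound_of_norm_deriv_right_le (E := ℝ × ℝ)
    (f := fun x => (u x - u' x, v x - v' x))
    (f' := fun x => (v x - v' x, (p x - s ^ 2) * u x - (p x - t ^ 2) * u' x))
    (δ := 0) (K := 1 + P + S ^ 2) (ε := |s ^ 2 - t ^ 2| * M) (a := 0) (b := π)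
    ((h.contU.sub h'.contU).prodMk (h.contV.sub h'.contV))
    (fun x hx => ((h.derivU x hx).sub (h'.derivU x hx)).prodMk
      ((h.derivV x hx).sub (h'.derivV x hx)))
    (by simp [hu0, hu0', hv0, hv0'])
    (by
      intro x hx
      have hx' := Set.Ico_subset_Icc_self hx
      have e1 : |u x - u' x| ≤ ‖(u x - u' x, v x - v' x)‖ := norm_fst_le (u x - u' x, v x - v' x)
      have e2 : |v x - v' x| ≤ ‖(u x - u' x, v x - v' x)‖ := norm_snd_le (u x - u' x, v x - v' x)
      set N := ‖(u x - u' x, v x - v' x)‖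
      have hN : 0 ≤ N := norm_nonneg _
      have hS : s ^ 2 ≤ S ^ 2 := sq_le_sq' (by linarith [abs_le.1 hs]) (abs_le.1 hs).2
      have hps : |p x - s ^ 2| ≤ P + S ^ 2 := by
        have := abs_le.1 (hP x hx')
        rw [abs_le]; constructor <;> nlinarith [sq_nonneg s]
      refine max_le ?_ ?_
      · change |v x - v' x| ≤ _
        have : 0 ≤ (P + S ^ 2) * N := by positivity
        have : 0 ≤ |s ^ 2 - t ^ 2| * M := by positivity
        nlinarith
      · change |(p x - s ^ 2) * u x - (p x - t ^ 2) * u' x| ≤ _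
        have : (p x - s ^ 2) * u x - (p x - t ^ 2) * u' x
          = (p x - s ^ 2) * (u x - u' x) - (s ^ 2 - t ^ 2) * u' x := by ring
        rw [this]
        refine (abs_sub _ _).trans ?_
        rw [abs_mul, abs_mul]
        have h1 : |p x - s ^ 2| * |u x - u' x| ≤ (P + S ^ 2) * N := by gcongr
        have h2 : |s ^ 2 - t ^ 2| * |u' x| ≤ |s ^ 2 - t ^ 2| * M := by
          gcongr; exact hM x hx'
        nlinarith)
    x hx
  refine (norm_fst_le (u x - u' x, v x - v' x)).trans (key.trans ?_)
  exact gronwallBound_zero_le (by nlinarith [sq_nonneg S]) (by positivity) (by linarith [hx.2])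

/-- Variation of constants: writing `s u = A cos(s x) + B sin(s x)` with
`A = s u cos(s x) - v sin(s x)` and `B = s u sin(s x) + v cos(s x)`, the pair `(A, B - 1)` starts
at zero and moves at speed `O(1/|s|)`, so that `s u(x) = sin(s x) + o(1)` uniformly in `x`. -/
lemma RightSol.asymp {p : ℝ → ℝ} {P s : ℝ} {u v : ℝ → ℝ}
    (hP : ∀ x ∈ Set.Icc 0 π, |p x| ≤ P) (h : RightSol p s u v)
    (hu0 : u 0 = 0) (hv0 : v 0 = 1) (hs : 1 + 2 * P ≤ |s|) {x : ℝ} (hx : x ∈ Set.Icc 0 π) :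
    |s * u x - sin (s * x)| ≤ 4 * P / |s| * exp π := by
  have hP0 : 0 ≤ P := (abs_nonneg _).trans (hP x hx)
  have hs0 : 0 < |s| := by linarith
  have hcos : ∀ x, HasDerivWithinAt (fun x => cos (s * x)) (-sin (s * x) * s) (Set.Ici x) x :=
    fun x => (((hasDerivAt_id x).const_mul s).cos.congr_deriv (by simp)).hasDerivWithinAt
  have hsin : ∀ x, HasDerivWithinAt (fun x => sin (s * x)) (cos (s * x) * s) (Set.Ici x) x :=
    fun x => (((hasDerivAt_id x).const_mul s).sin.congr_deriv (by simp)).hasDerivWithinAt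
  set A : ℝ → ℝ := fun x => s * u x * cos (s * x) - v x * sin (s * x) with hA
  set B : ℝ → ℝ := fun x => s * u x * sin (s * x) + v x * cos (s * x) - 1 with hB
  have hu : ∀ x, s * u x = A x * cos (s * x) + (B x + 1) * sin (s * x) := by
    intro x
    simp only [hA, hB]
    linear_combination (-(s * u x)) * sin_sq_add_cos_sq (s * x)
  have hcU := h.contU
  have hcV := h.contV
  have contA : ContinuousOn A (Set.Icc 0 π) := by fun_prop
  have contB : ContinuousOn B (Set.Icc 0 π) := by fun_prop
  have key := norm_le_gronwallBound_of_norm_deriv_right_le (E := ℝ × ℝ)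
    (f := fun x => (A x, B x))
    (f' := fun x => (-(p x * u x * sin (s * x)), p x * u x * cos (s * x)))
    (δ := 0) (K := 1) (ε := P / |s|) (a := 0) (b := π) (contA.prodMk contB)
    (fun x hx => by
      have dU := h.derivU x hx
      have dV := h.derivV x hx
      refine HasDerivWithinAt.prodMk ?_ ?_
      · exact (((dU.const_mul s).mul (hcos x)).sub (dV.mul (hsin x))).congr_deriv (by ring)
      · exact ((((dU.const_mul s).mul (hsin x)).add (dV.mul (hcos x))).sub_const 1).congr_deriv
          (by ring))
    (by simp [hA, hB, hu0, hv0])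
    (by
      intro x hx
      have hx' := Set.Ico_subset_Icc_self hx
      have e1 : |A x| ≤ ‖(A x, B x)‖ := norm_fst_le (A x, B x)
      have e2 : |B x| ≤ ‖(A x, B x)‖ := norm_snd_le (A x, B x)
      set N := ‖(A x, B x)‖
      have hN : 0 ≤ N := norm_nonneg _
      have c1 := abs_cos_le_one (s * x)
      have s1 := abs_sin_le_one (s * x)
      have hsu : |s| * |u x| ≤ 2 * N + 1 := by
        rw [← abs_mul, hu]
        have : A x * cos (s * x) + (B x + 1) * sin (s * x)
          = A x * cos (s * x) + B x * sin (s * x) + sin (s * x) := by ring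
        rw [this]
        refine (abs_add_three _ _ _).trans ?_
        rw [abs_mul, abs_mul]
        nlinarith [abs_nonneg (A x), abs_nonneg (B x)]
      have hpu : |p x * u x| ≤ 1 * N + P / |s| := by
        rw [abs_mul]
        have h1 : |u x| ≤ (2 * N + 1) / |s| := by
          rw [le_div_iff₀ hs0]; linarith
        have h2 : |p x| * |u x| ≤ P * ((2 * N + 1) / |s|) := by
          gcongr; exact hP x hx'
        have h3 : 2 * P / |s| ≤ 1 := by rw [div_le_one hs0]; linarith
        have h4 : P * ((2 * N + 1) / |s|) = 2 * P / |s| * N + P / |s| := by ring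
        nlinarith
      refine max_le ?_ ?_
      · change |-(p x * u x * sin (s * x))| ≤ _
        rw [abs_neg, abs_mul]
        nlinarith [abs_nonneg (p x * u x)]
      · change |p x * u x * cos (s * x)| ≤ _
        rw [abs_mul]
        nlinarith [abs_nonneg (p x * u x)])
    x hx
  have key2 := key.trans (gronwallBound_zero_le (ε := P / |s|) le_rfl (by positivity)
    (by linarith [hx.2]))
  rw [one_mul] at key2
  have e1 : |A x| ≤ P / |s| * exp π := (norm_fst_le (A x, B x)).trans key2
  have e2 : |B x| ≤ P / |s| * exp π := (norm_snd_le (A x, B x)).trans key2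
  have : s * u x - sin (s * x) = A x * cos (s * x) + B x * sin (s * x) := by
    rw [hu x]; ring
  rw [this]
  refine (abs_add_le _ _).trans ?_
  rw [abs_mul, abs_mul]
  have c1 := abs_cos_le_one (s * x)
  have s1 := abs_sin_le_one (s * x)
  have : 4 * P / |s| * exp π = 4 * (P / |s| * exp π) := by ring
  have : 0 ≤ P / |s| * exp π := by positivity
  nlinarith [abs_nonneg (A x), abs_nonneg (B x)]

/-- Dirichlet eigenfunctions for distinct eigenvalues are orthogonal: the Wronskian
`u v' - u' v` has derivative `(s² - t²) u u'` and vanishes at both endpoints. -/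
lemma RightSol.orthogonal {p : ℝ → ℝ} {s t : ℝ} {u v u' v' : ℝ → ℝ}
    (h : RightSol p s u v) (h' : RightSol p t u' v') (hu0 : u 0 = 0) (hu0' : u' 0 = 0)
    (hπ : u π = 0) (hπ' : u' π = 0) (hst : s ^ 2 ≠ t ^ 2) :
    ∫ x in (0 : ℝ)..π, u x * u' x = 0 := by
  have hcU := h.contU
  have hcV := h.contV
  have hcU' := h'.contU
  have hcV' := h'.contV
  have hpi := pi_pos.le
  have key := intervalIntegral.integral_eq_sub_of_hasDeriv_right (a := 0) (b := π)
    (f := fun x => u x * v' x - u' x * v x) (f' := fun x => (s ^ 2 - t ^ 2) * (u x * u' x))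
    (by rw [Set.uIcc_of_le hpi]; fun_prop)
    (by
      intro x hx
      rw [min_eq_left hpi, max_eq_right hpi] at hx
      have hx' := Set.Ioo_subset_Ico_self hx
      exact ((((h.derivU x hx').mul (h'.derivV x hx')).sub
        ((h'.derivU x hx').mul (h.derivV x hx'))).congr_deriv (by ring)).mono
        Set.Ioi_subset_Ici_self)
    (by
      apply ContinuousOn.intervalIntegrable
      rw [Set.uIcc_of_le hpi]; fun_prop)
  rw [intervalIntegral.integral_const_mul] at key
  simp only [hu0, hu0', hπ, hπ', zero_mul, sub_zero] at key
  exact (mul_eq_zero.1 key).resolve_left (sub_ne_zero.2 hst)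

/-- Two eigenfunctions that are, after scaling, close to a common profile `g` belong to the same
eigenvalue, as otherwise orthogonality would make `∫ g²` small. -/
lemma RightSol.sq_eq_of_close {p : ℝ → ℝ} {s t κ κ' η M : ℝ} {u v u' v' g : ℝ → ℝ}
    (h : RightSol p s u v) (h' : RightSol p t u' v') (hu0 : u 0 = 0) (hu0' : u' 0 = 0)
    (hπ : u π = 0) (hπ' : u' π = 0) (hg : ContinuousOn g (Set.Icc 0 π))
    (hM : ∀ x ∈ Set.Icc 0 π, |g x| ≤ M)
    (hc : ∀ x ∈ Set.Icc 0 π, |κ * u x - g x| ≤ η)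
    (hc' : ∀ x ∈ Set.Icc 0 π, |κ' * u' x - g x| ≤ η)
    (hη : π * (2 * η * M + η ^ 2) < ∫ x in (0 : ℝ)..π, g x ^ 2) : s ^ 2 = t ^ 2 := by
  by_contra hst
  have horth := h.orthogonal h' hu0 hu0' hπ hπ' hst
  have hcU := h.contU
  have hcU' := h'.contU
  have hpi := pi_pos.le
  have i1 : IntervalIntegrable (fun x => g x ^ 2 - (2 * η * M + η ^ 2)) volume 0 π := by
    apply ContinuousOn.intervalIntegrable
    rw [Set.uIcc_of_le hpi]; fun_prop
  have i2 : IntervalIntegrable (fun x => (κ * κ') * (u x * u' x)) volume 0 π := by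
    apply ContinuousOn.intervalIntegrable
    rw [Set.uIcc_of_le hpi]; fun_prop
  have hle := intervalIntegral.integral_mono_on hpi i1 i2 (by
    intro x hx
    have a1 := hc x hx
    have a2 := hc' x hx
    have a3 := hM x hx
    have b1 : |g x * (κ * u x - g x)| ≤ M * η := by
      rw [abs_mul]; gcongr; exact (abs_nonneg _).trans a3
    have b2 : |g x * (κ' * u' x - g x)| ≤ M * η := by
      rw [abs_mul]; gcongr; exact (abs_nonneg _).trans a3
    have b3 : |(κ * u x - g x) * (κ' * u' x - g x)| ≤ η * η := by
      rw [abs_mul]; gcongr; exact (abs_nonneg _).trans a1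
    have b1 := (abs_le.1 b1).1
    have b2 := (abs_le.1 b2).1
    have b3 := (abs_le.1 b3).1
    nlinarith)
  rw [intervalIntegral.integral_const_mul, horth, mul_zero, intervalIntegral.integral_sub
    (by apply ContinuousOn.intervalIntegrable; rw [Set.uIcc_of_le hpi]; fun_prop)
    (by simp), intervalIntegral.integral_const, smul_eq_mul, sub_zero] at hle
  linarith

/-! ### Matching with arithmetic progressions -/

/-- The weight `w(k, (l, n)) = |(δ_l k, δ_l (k+1)] ∩ (n, n+1]|` is a fractional matching: each `k`
emits total weight `∑ δ_l = 1` and each `(l, n)` receives total weight at most `1`. Hall's marriage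
theorem turns it into an honest injection supported where the weight is positive. -/
lemma exists_injective_progressions {L : ℕ} (δ : Fin L → ℝ) (hδ : ∀ l, 0 < δ l)
    (hsum : ∑ l, δ l = 1) :
    ∃ f : ℤ → Fin L × ℤ, Function.Injective f ∧
      ∀ k, δ (f k).1 * k - 1 ≤ (f k).2 ∧ ((f k).2 : ℝ) ≤ δ (f k).1 * (k + 1) := by
  classical
  set t : ℤ → Finset (Fin L × ℤ) := fun k =>
    (Finset.univ : Finset (Fin L)).sigma
      (fun l => Finset.Icc ⌈δ l * k - 1⌉ ⌊δ l * (k + 1)⌋) |>.map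
        (Equiv.sigmaEquivProd (Fin L) ℤ).toEmbedding with ht
  have hmem : ∀ k x, x ∈ t k ↔ δ x.1 * k - 1 ≤ x.2 ∧ (x.2 : ℝ) ≤ δ x.1 * (k + 1) := by
    intro k x
    simp [ht, Int.ceil_le, Int.le_floor]
  obtain ⟨f, hf, hft⟩ := (Finset.all_card_le_biUnion_card_iff_exists_injective t).1 (by
    intro s
    set A : ℤ → Fin L → Set ℝ := fun k l => Set.Ioc (δ l * k) (δ l * (k + 1))
    set w : ℤ → Fin L × ℤ → ENNReal := fun k x =>
      volume (A k x.1 ∩ Set.Ioc (x.2 : ℝ) (x.2 + 1)) with hw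
    have h1 : ∀ k, (1 : ENNReal) ≤ ∑ x ∈ t k, w k x := by
      intro k
      have : (1 : ENNReal) = ∑ l, volume (A k l) := by
        simp only [A, Real.volume_Ioc]
        rw [← ENNReal.ofReal_sum_of_nonneg (fun l _ => by nlinarith [hδ l])]
        rw [show ∑ l, (δ l * ((k : ℝ) + 1) - δ l * k) = 1 by
          exact (Finset.sum_congr rfl fun l _ => by ring).trans hsum]
        simp
      rw [this]
      simp only [ht, Finset.sum_map, Finset.sum_sigma]
      refine Finset.sum_le_sum fun l _ => ?_
      refine le_trans (measure_mono ?_) (measure_biUnion_finset_le _ _)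
      intro x hx
      simp only [Set.mem_iUnion, Finset.mem_Icc]
      have c1 := Int.ceil_lt_add_one x
      have c2 := Int.le_ceil x
      refine ⟨⌈x⌉ - 1, ⟨?_, ?_⟩, hx, ?_⟩
      · rw [Int.ceil_le]; push_cast; linarith [hx.1]
      · rw [Int.le_floor]; push_cast; linarith [hx.2]
      · simp only [Equiv.coe_toEmbedding, Equiv.sigmaEquivProd_apply, Set.mem_Ioc]
        push_cast; constructor <;> linarith
    have h2 : ∀ x, ∑ k ∈ s, w k x ≤ 1 := by
      intro x
      simp only [hw]
      rw [← measure_biUnion_finset]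
      · refine (measure_mono (t := Set.Ioc (x.2 : ℝ) (x.2 + 1)) ?_).trans (by simp)
        simp
      · intro k _ k' _ hkk'
        refine Set.disjoint_left.2 ?_
        rintro z ⟨⟨hz1, hz2⟩, -⟩ ⟨⟨hz3, hz4⟩, -⟩
        have d1 : (k : ℝ) < k' + 1 := lt_of_mul_lt_mul_left (hz1.trans_le hz4) (hδ _).le
        have d2 : (k' : ℝ) < k + 1 := lt_of_mul_lt_mul_left (hz3.trans_le hz2) (hδ _).le
        have d1 : k < k' + 1 := by exact_mod_cast d1
        have d2 : k' < k + 1 := by exact_mod_cast d2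
        omega
      · intro k _
        exact measurableSet_Ioc.inter measurableSet_Ioc
    have : (s.card : ENNReal) ≤ ((s.biUnion t).card : ENNReal) := by
      calc (s.card : ENNReal) = ∑ k ∈ s, 1 := by simp
        _ ≤ ∑ k ∈ s, ∑ x ∈ t k, w k x := Finset.sum_le_sum fun k _ => h1 k
        _ ≤ ∑ k ∈ s, ∑ x ∈ s.biUnion t, w k x := Finset.sum_le_sum fun k hk =>
            Finset.sum_le_sum_of_subset (Finset.subset_biUnion_of_mem t hk)
        _ = ∑ x ∈ s.biUnion t, ∑ k ∈ s, w k x := Finset.sum_comm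
        _ ≤ ∑ x ∈ s.biUnion t, 1 := Finset.sum_le_sum fun x _ => h2 x
        _ = _ := by simp
    exact_mod_cast this)
  exact ⟨f, hf, fun k => (hmem k _).1 (hft k)⟩

/-- If a set of reals has finitely many elements in `[-R, R]` and its other elements round to distinct
integers, then it embeds in `ℤ` with bounded displacement: the `F` elements of the middle part
are sent to `0, …, F - 1`, and the rounded values beyond `R` are shifted up by `F`. -/
lemma exists_injOn_int {Z : Set ℝ} {R : ℝ} (hR : 1 ≤ R)
    (hfin : (Z ∩ Set.Icc (-R) R).Finite)
    (huniq : ∀ x ∈ Z, ∀ x' ∈ Z, R < |x| → R < |x'| → round x = round x' → x = x') :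
    ∃ ψ : ℝ → ℤ, ∃ D : ℝ, Set.InjOn ψ Z ∧ ∀ x ∈ Z, |x - ψ x| ≤ D := by
  classical
  have := hfin.fintype
  set F := Fintype.card ↥(Z ∩ Set.Icc (-R) R) with hF
  let e := Fintype.equivFin ↥(Z ∩ Set.Icc (-R) R)
  have hF0 : (0 : ℝ) ≤ F := Nat.cast_nonneg _
  set ψ : ℝ → ℤ := fun x => if h : x ∈ Z ∩ Set.Icc (-R) R then ((e ⟨x, h⟩ : ℕ) : ℤ)
    else if 0 < x then round x + F else round x with hψ
  have hmid : ∀ x (h : x ∈ Z ∩ Set.Icc (-R) R), ψ x = ((e ⟨x, h⟩ : ℕ) : ℤ) := fun x h => by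
    simp only [hψ, dif_pos h]
  have hpos : ∀ x, R < x → ψ x = round x + F := fun x h => by
    have : x ∉ Z ∩ Set.Icc (-R) R := fun h' => by linarith [h'.2.2]
    simp only [hψ, dif_neg this, if_pos (show 0 < x by linarith)]
  have hneg : ∀ x, x < -R → ψ x = round x := fun x h => by
    have : x ∉ Z ∩ Set.Icc (-R) R := fun h' => by linarith [h'.2.1]
    simp only [hψ, dif_neg this, if_neg (show ¬ 0 < x by linarith)]
  have hrpos : ∀ x, R < x → 0 ≤ round x := fun x h => by
    have := abs_le.1 (abs_sub_round x)
    have : (-1 : ℝ) < round x := by linarith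
    have : (-1 : ℤ) < round x := by exact_mod_cast this
    omega
  have hrneg : ∀ x, x < -R → round x < 0 := fun x h => by
    have := abs_le.1 (abs_sub_round x)
    have : (round x : ℝ) < 0 := by linarith
    exact_mod_cast this
  have htri : ∀ x ∈ Z, x ∈ Z ∩ Set.Icc (-R) R ∨ R < x ∨ x < -R := fun x hx => by
    by_cases h1 : R < x
    · exact Or.inr (Or.inl h1)
    by_cases h2 : x < -R
    · exact Or.inr (Or.inr h2)
    exact Or.inl ⟨hx, not_lt.1 h2, not_lt.1 h1⟩
  refine ⟨ψ, R + F + 1, ?_, ?_⟩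
  · intro x hx x' hx' hxx
    have absp : ∀ x, R < x → R < |x| := fun x h => h.trans_le (le_abs_self x)
    have absn : ∀ x, x < -R → R < |x| := fun x h => by
      have := neg_le_abs x; linarith
    rcases htri x hx with h | h | h <;> rcases htri x' hx' with h' | h' | h'
    · rw [hmid x h, hmid x' h'] at hxx
      have : e ⟨x, h⟩ = e ⟨x', h'⟩ := Fin.ext (by exact_mod_cast hxx)
      simpa using e.injective this
    · rw [hmid x h, hpos x' h'] at hxx
      have := (e ⟨x, h⟩).2; have := hrpos x' h'; omega
    · rw [hmid x h, hneg x' h'] at hxx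
      have := hrneg x' h'; omega
    · rw [hpos x h, hmid x' h'] at hxx
      have := (e ⟨x', h'⟩).2; have := hrpos x h; omega
    · rw [hpos x h, hpos x' h'] at hxx
      exact huniq x hx x' hx' (absp x h) (absp x' h') (by omega)
    · rw [hpos x h, hneg x' h'] at hxx
      have := hrpos x h; have := hrneg x' h'; omega
    · rw [hneg x h, hmid x' h'] at hxx
      have := hrneg x h; omega
    · rw [hneg x h, hpos x' h'] at hxx
      have := hrneg x h; have := hrpos x' h'; omega
    · rw [hneg x h, hneg x' h'] at hxx
      exact huniq x hx x' hx' (absn x h) (absn x' h') hxx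
  · intro x hx
    rcases htri x hx with h | h | h
    · rw [hmid x h]
      have h1 : (((e ⟨x, h⟩ : ℕ) : ℤ) : ℝ) ≤ F := by
        exact_mod_cast (e ⟨x, h⟩).2.le
      have h2 : (0 : ℝ) ≤ (((e ⟨x, h⟩ : ℕ) : ℤ) : ℝ) := by positivity
      rw [abs_le]; constructor <;> linarith [h.2.1, h.2.2]
    · rw [hpos x h]
      have := abs_le.1 (abs_sub_round x)
      push_cast
      rw [abs_le]; constructor <;> linarith
    · rw [hneg x h]
      have := abs_le.1 (abs_sub_round x)
      rw [abs_le]; constructor <;> linarith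

/-- A relatively dense set that embeds in `ℤ` with bounded displacement is the union of
families that follow the progressions `n / δ_l`, provided the densities `δ_l` sum to one: the
indices hit by the matching receive the matched element, all others any nearby element. -/
lemma exists_families {Z : Set ℝ} {L : ℕ} (δ : Fin L → ℝ) (hδ : ∀ l, 0 < δ l)
    (hsum : ∑ l, δ l = 1) {R : ℝ} (hdense : ∀ a : ℝ, ∃ x ∈ Z, |x - a| ≤ R)
    (hψ : ∃ ψ : ℝ → ℤ, ∃ D : ℝ, Set.InjOn ψ Z ∧ ∀ x ∈ Z, |x - ψ x| ≤ D) :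
    ∃ z : Fin L → ℤ → ℝ, ∃ C > (0 : ℝ), (∀ l n, z l n ∈ Z) ∧
      (∀ l n, |z l n - n / δ l| ≤ C) ∧ ∀ x ∈ Z, ∃ l n, z l n = x := by
  classical
  obtain ⟨ψ, D, hinj, hD⟩ := hψ
  obtain ⟨f, hf, hfδ⟩ := exists_injective_progressions δ hδ hsum
  choose near hnear hnear' using hdense
  set S := ∑ l, 1 / δ l
  have hS : ∀ l, 1 / δ l ≤ S := fun l =>
    Finset.single_le_sum (f := fun l => 1 / δ l) (fun i _ => (one_div_pos.2 (hδ i)).le)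
      (Finset.mem_univ l)
  have hS0 : 0 ≤ S := Finset.sum_nonneg fun i _ => (one_div_pos.2 (hδ i)).le
  have hclose : ∀ k : ℤ, |(k : ℝ) - (f k).2 / δ (f k).1| ≤ 1 + S := by
    intro k
    obtain ⟨h1, h2⟩ := hfδ k
    have h3 := hS (f k).1
    have hd := hδ (f k).1
    have e1 : ((f k).2 : ℝ) / δ (f k).1 ≤ k + 1 := by
      rw [div_le_iff₀ hd]; linarith
    have e2 : (k : ℝ) - 1 / δ (f k).1 ≤ (f k).2 / δ (f k).1 := by
      rw [le_div_iff₀ hd, sub_mul, div_mul_cancel₀ _ hd.ne']; linarith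
    rw [abs_le]; constructor <;> linarith
  let z : Fin L → ℤ → ℝ := fun l n =>
    if h : ∃ x ∈ Z, f (ψ x) = (l, n) then h.choose else near (n / δ l)
  have hz1 : ∀ l n, (h : ∃ x ∈ Z, f (ψ x) = (l, n)) → z l n ∈ Z ∧ f (ψ (z l n)) = (l, n) := by
    intro l n h
    simp only [z, dif_pos h]
    exact h.choose_spec
  have hz2 : ∀ l n, (h : ¬ ∃ x ∈ Z, f (ψ x) = (l, n)) → z l n = near (n / δ l) := by
    intro l n h
    simp only [z, dif_neg h]
  refine ⟨z, |R| + |D| + S + 1, by positivity, ?_, ?_, ?_⟩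
  · intro l n
    by_cases h : ∃ x ∈ Z, f (ψ x) = (l, n)
    · exact (hz1 l n h).1
    · rw [hz2 l n h]; exact hnear _
  · intro l n
    by_cases h : ∃ x ∈ Z, f (ψ x) = (l, n)
    · obtain ⟨h1, h2⟩ := hz1 l n h
      have h3 := hD _ h1
      have h4 := hclose (ψ (z l n))
      rw [h2] at h4
      have := abs_sub_le (z l n) (ψ (z l n)) (n / δ l)
      simp only at h4
      linarith [le_abs_self D, abs_nonneg R]
    · rw [hz2 l n h]
      linarith [hnear' (n / δ l), le_abs_self R, abs_nonneg D]
  · intro x hx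
    have h : ∃ x' ∈ Z, f (ψ x') = ((f (ψ x)).1, (f (ψ x)).2) := ⟨x, hx, rfl⟩
    obtain ⟨h1, h2⟩ := hz1 _ _ h
    exact ⟨_, _, hinj h1 hx (hf h2)⟩

/-! ### The zeros of `s ↦ u(s, π)` -/

/-- For a real spectral parameter the real and imaginary parts of a solution both solve the real
system; the imaginary part has zero initial data, hence vanishes. -/
lemma IsSLSolution.exists_rightSol {p : ℝ → ℝ} {P s : ℝ} {y yd : ℝ → ℂ}
    (hP : ∀ x ∈ Set.Icc 0 π, |p x| ≤ P)
    (hcont : ∀ x ∈ Set.Ico 0 π, ContinuousWithinAt p (Set.Ici x) x)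
    (hpint : IntervalIntegrable p volume 0 π) (h : IsSLSolution p (s : ℂ) y yd) :
    ∃ u v : ℝ → ℝ, RightSol p s u v ∧ u 0 = 0 ∧ v 0 = 1 ∧ (y π = 0 ↔ u π = 0) := by
  obtain ⟨h0, h1, h2⟩ := h
  have hpi := pi_pos.le
  have hyc : ContinuousOn y (Set.Icc 0 π) := fun x hx => (h1 x hx).continuousWithinAt
  have hi : IntervalIntegrable (fun t => ((p t : ℂ) - (s : ℂ) ^ 2) * y t) volume 0 π := by
    refine IntervalIntegrable.mul_continuousOn ?_ (by rwa [Set.uIcc_of_le hpi])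
    exact IntervalIntegrable.sub ⟨hpint.1.ofReal, hpint.2.ofReal⟩ intervalIntegrable_const
  have hd0 : yd 0 = 1 := by simpa using h2 0 ⟨le_rfl, hpi⟩
  have hydc : ContinuousOn yd (Set.Icc 0 π) := by
    have := intervalIntegral.continuousOn_primitive_interval (μ := volume) (a := 0) (b := π)
      (by
        rw [Set.uIcc_of_le hpi]
        exact (intervalIntegrable_iff_integrableOn_Icc_of_le hpi).1 hi)
    rw [Set.uIcc_of_le hpi] at this
    exact (continuousOn_const.add this).congr h2
  have hnhds : ∀ x ∈ Set.Ico 0 π, Set.Icc 0 π ∈ nhdsWithin x (Set.Ici x) := fun x hx =>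
    Filter.mem_of_superset (Icc_mem_nhdsGE hx.2) (Set.Icc_subset_Icc_left hx.1)
  have hy' : ∀ x ∈ Set.Ico 0 π, HasDerivWithinAt y (yd x) (Set.Ici x) x := fun x hx =>
    (h1 x (Set.Ico_subset_Icc_self hx)).mono_of_mem_nhdsWithin (hnhds x hx)
  have hyd' : ∀ x ∈ Set.Ico 0 π,
      HasDerivWithinAt yd (((p x : ℂ) - (s : ℂ) ^ 2) * y x) (Set.Ici x) x := by
    intro x hx
    have hx' := Set.Ico_subset_Icc_self hx
    have hc : ContinuousWithinAt (fun t => ((p t : ℂ) - (s : ℂ) ^ 2) * y t) (Set.Ioi x) x := by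
      refine ContinuousWithinAt.mul (ContinuousWithinAt.sub ?_ continuousWithinAt_const) ?_
      · exact Complex.continuous_ofReal.continuousAt.comp_continuousWithinAt
          ((hcont x hx).mono Set.Ioi_subset_Ici_self)
      · exact (hy' x hx).continuousWithinAt.mono Set.Ioi_subset_Ici_self
    have hm : StronglyMeasurableAtFilter (fun t => ((p t : ℂ) - (s : ℂ) ^ 2) * y t)
        (nhdsWithin x (Set.Ioi x)) volume := by
      refine ⟨Set.Ioc 0 π, Filter.mem_of_superset (Ioc_mem_nhdsGT hx.2)
        (Set.Ioc_subset_Ioc_left hx.1), ?_⟩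
      exact hi.aestronglyMeasurable
    have hix : IntervalIntegrable (fun t => ((p t : ℂ) - (s : ℂ) ^ 2) * y t) volume 0 x :=
      hi.mono_set (by
        rw [Set.uIcc_of_le hx.1, Set.uIcc_of_le hpi]
        exact Set.Icc_subset_Icc_right hx.2.le)
    have := (intervalIntegral.integral_hasDerivWithinAt_right hix (s := Set.Ici x)
      (t := Set.Ioi x) hm hc).const_add 1
    refine this.congr_of_eventuallyEq ?_ (h2 x hx')
    filter_upwards [hnhds x hx] with z hz using h2 z hz
  have hmulre : ∀ x, (((p x : ℂ) - (s : ℂ) ^ 2) * y x).re = (p x - s ^ 2) * (y x).re := fun x => by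
    rw [← Complex.ofReal_pow, ← Complex.ofReal_sub, Complex.re_ofReal_mul]
  have hmulim : ∀ x, (((p x : ℂ) - (s : ℂ) ^ 2) * y x).im = (p x - s ^ 2) * (y x).im := fun x => by
    rw [← Complex.ofReal_pow, ← Complex.ofReal_sub, Complex.im_ofReal_mul]
  have hre : RightSol p s (fun x => (y x).re) (fun x => (yd x).re) :=
    ⟨Complex.continuous_re.comp_continuousOn hyc, Complex.continuous_re.comp_continuousOn hydc,
      fun x hx => Complex.reCLM.hasFDerivAt.comp_hasDerivWithinAt x (hy' x hx),
      fun x hx => (Complex.reCLM.hasFDerivAt.comp_hasDerivWithinAt x (hyd' x hx)).congr_deriv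
        (hmulre x)⟩
  have him : RightSol p s (fun x => (y x).im) (fun x => (yd x).im) :=
    ⟨Complex.continuous_im.comp_continuousOn hyc, Complex.continuous_im.comp_continuousOn hydc,
      fun x hx => Complex.imCLM.hasFDerivAt.comp_hasDerivWithinAt x (hy' x hx),
      fun x hx => (Complex.imCLM.hasFDerivAt.comp_hasDerivWithinAt x (hyd' x hx)).congr_deriv
        (hmulim x)⟩
  have hzero : RightSol p s (fun _ => 0) (fun _ => 0) :=
    ⟨continuousOn_const, continuousOn_const, fun x _ => hasDerivWithinAt_const _ _ _,
      fun x _ => by simpa using hasDerivWithinAt_const x (Set.Ici x) (0 : ℝ)⟩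
  have him0 : (y π).im = 0 := by
    have := him.dist_le (a := 0) (b := 0) (M := 0) hP hzero (by simp [h0]) rfl (by simp [hd0]) rfl
      le_rfl (by simp) (x := π) ⟨hpi, le_rfl⟩
    simpa using this
  refine ⟨_, _, hre, by simp [h0], by simp [hd0], ?_⟩
  simp [Complex.ext_iff, him0]

/-- A solution with `u(0) = 0`, `u'(0) = 1` is not identically zero. -/
lemma RightSol.integral_sq_pos {p : ℝ → ℝ} {s : ℝ} {u v : ℝ → ℝ} (h : RightSol p s u v)
    (hv0 : v 0 = 1) : 0 < ∫ x in (0 : ℝ)..π, u x ^ 2 := by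
  refine intervalIntegral.integral_pos pi_pos (h.contU.pow 2) (fun x _ => sq_nonneg _) ?_
  by_contra hcon
  push Not at hcon
  have hz : ∀ x ∈ Set.Icc 0 π, u x = 0 := fun x hx =>
    pow_eq_zero_iff two_ne_zero |>.1 (le_antisymm (hcon x hx) (sq_nonneg _))
  have h0 : (0 : ℝ) ∈ Set.Ico 0 π := ⟨le_rfl, pi_pos⟩
  have hd : HasDerivWithinAt u 0 (Set.Ici 0) 0 := by
    refine (hasDerivWithinAt_const (0 : ℝ) (Set.Ici 0) (0 : ℝ)).congr_of_eventuallyEq ?_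
      (hz 0 ⟨le_rfl, pi_pos.le⟩)
    filter_upwards [Icc_mem_nhdsGE pi_pos] with z hz' using hz z hz'
  have := (uniqueDiffWithinAt_Ici (0 : ℝ)).eq_deriv _ (h.derivU 0 h0) hd
  rw [hv0] at this
  exact one_ne_zero this

section Zeros

variable {p : ℝ → ℝ} {P : ℝ} {u v : ℝ → ℝ → ℝ}

/-- Continuity of `s ↦ u(s, ·)` in the supremum norm. -/
lemma eventually_close (hP : ∀ x ∈ Set.Icc 0 π, |p x| ≤ P)
    (h : ∀ s, RightSol p s (u s) (v s)) (hu0 : ∀ s, u s 0 = 0) (hv0 : ∀ s, v s 0 = 1)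
    (t : ℝ) {η : ℝ} (hη : 0 < η) :
    ∀ᶠ s in nhds t, ∀ x ∈ Set.Icc 0 π, |u s x - u t x| ≤ η := by
  obtain ⟨M, hM⟩ := isCompact_Icc.exists_bound_of_continuousOn (h t).contU
  have htend : Filter.Tendsto
      (fun s => |s ^ 2 - t ^ 2| * M * exp ((1 + P + (|t| + 1) ^ 2) * π)) (nhds t) (nhds 0) := by
    have : Continuous (fun s : ℝ => |s ^ 2 - t ^ 2| * M * exp ((1 + P + (|t| + 1) ^ 2) * π)) := by
      fun_prop
    simpa using this.tendsto t
  filter_upwards [htend.eventually (gt_mem_nhds hη),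
    (continuous_abs.tendsto t).eventually (gt_mem_nhds (show |t| < |t| + 1 by linarith))]
    with s hs1 hs2 x hx
  exact ((h s).dist_le hP (h t) (hu0 s) (hu0 t) (hv0 s) (hv0 t) hs2.le hM hx).trans hs1.le

/-- The real zeros of `s ↦ u(s, π)` are locally finite: near any `t` all zeros have the same
square. -/
lemma zeros_finite (hP : ∀ x ∈ Set.Icc 0 π, |p x| ≤ P)
    (h : ∀ s, RightSol p s (u s) (v s)) (hu0 : ∀ s, u s 0 = 0) (hv0 : ∀ s, v s 0 = 1) (R : ℝ) :
    ({s | u s π = 0} ∩ Set.Icc (-R) R).Finite := by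
  refine isCompact_Icc.induction_on (p := fun T => ({s | u s π = 0} ∩ T).Finite) (by simp)
    (fun T T' hT hT' => hT'.subset (Set.inter_subset_inter_right _ hT))
    (fun T T' hT hT' => by rw [Set.inter_union_distrib_left]; exact hT.union hT') ?_
  intro t _
  have hI := (h t).integral_sq_pos (hv0 t)
  set I := ∫ x in (0 : ℝ)..π, u t x ^ 2
  obtain ⟨M, hM⟩ := isCompact_Icc.exists_bound_of_continuousOn (h t).contU
  have hsmall : ∃ η > 0, π * (2 * η * M + η ^ 2) < I := by
    have : Filter.Tendsto (fun η : ℝ => π * (2 * η * M + η ^ 2)) (nhdsWithin 0 (Set.Ioi 0))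
        (nhds 0) := by
      have : Continuous (fun η : ℝ => π * (2 * η * M + η ^ 2)) := by fun_prop
      simpa using (this.tendsto 0).mono_left nhdsWithin_le_nhds
    obtain ⟨η, h1, h2⟩ := ((this.eventually (gt_mem_nhds hI)).and self_mem_nhdsWithin).exists
    exact ⟨η, h2, h1⟩
  obtain ⟨η, hη, hηI⟩ := hsmall
  refine ⟨_, mem_nhdsWithin_of_mem_nhds (eventually_close hP h hu0 hv0 t hη), ?_⟩
  rcases Set.eq_empty_or_nonempty ({s | u s π = 0} ∩
    {s | ∀ x ∈ Set.Icc 0 π, |u s x - u t x| ≤ η}) with he | ⟨s, hs1, hs2⟩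
  · rw [he]; exact Set.finite_empty
  · refine (Set.toFinite {s, -s}).subset ?_
    rintro s' ⟨hs1', hs2'⟩
    have := (h s').sq_eq_of_close (h s) (κ := 1) (κ' := 1) (hu0 s') (hu0 s) hs1' hs1 (h t).contU hM
      (by simpa using hs2') (by simpa using hs2) hηI
    simpa using sq_eq_sq_iff_eq_or_eq_neg.1 this

lemma integral_sin_int_mul_sq {n : ℤ} (hn : n ≠ 0) :
    ∫ x in (0 : ℝ)..π, sin (n * x) ^ 2 = π / 2 := by
  have hn' : (n : ℝ) ≠ 0 := by exact_mod_cast hn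
  rw [intervalIntegral.integral_comp_mul_left (fun x => sin x ^ 2) hn', integral_sin_sq]
  simp only [mul_zero, sin_zero, zero_mul, sin_int_mul_pi, smul_eq_mul]
  field_simp
  ring

/-- Far out every zero is so close to an integer `n` that its scaled eigenfunction is close to
`sin(n x)`; by orthogonality no other zero rounds to `n`. -/
lemma zeros_round_inj (hu0 : ∀ s, u s 0 = 0)
    (h : ∀ s, RightSol p s (u s) (v s)) {N : ℝ} (hN : 1 ≤ N)
    (has : ∀ s, N ≤ |s| → ∀ x ∈ Set.Icc 0 π, |s * u s x - sin (s * x)| ≤ 1 / 20)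
    {s t : ℝ} (hs : u s π = 0) (ht : u t π = 0) (hsN : N < |s|) (htN : N < |t|)
    (hst : round s = round t) : s = t := by
  have hpi3 := pi_lt_four
  have hpi := pi_pos
  have hclose : ∀ s, u s π = 0 → N < |s| → ∀ x ∈ Set.Icc 0 π,
      |s * u s x - sin ((round s : ℤ) * x)| ≤ 3 / 20 := by
    intro s hs hsN x hx
    have h1 := has s hsN.le π ⟨hpi.le, le_rfl⟩
    rw [hs, mul_zero, zero_sub, abs_neg] at h1
    have h2 : |sin (s * π)| = |sin ((s - round s) * π)| := by
      rw [sub_mul, sin_sub_int_mul_pi, abs_mul, abs_zpow]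
      simp
    have h3 := abs_sub_round s
    have h4 : |(s - round s) * π| ≤ π / 2 := by
      rw [abs_mul, abs_of_pos hpi]; nlinarith
    have h5 := mul_abs_le_abs_sin h4
    rw [← h2, abs_mul, abs_of_pos hpi] at h5
    have h6 : 2 / π * (|s - round s| * π) = 2 * |s - round s| := by field_simp
    rw [h6] at h5
    have h7 : |sin (s * x) - sin ((round s : ℤ) * x)| ≤ |s * x - (round s : ℤ) * x| := by
      have := lipschitzWith_sin.dist_le_mul (s * x) ((round s : ℤ) * x)
      simpa [Real.dist_eq] using this
    rw [← sub_mul, abs_mul, abs_of_nonneg hx.1] at h7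
    have h8 := has s hsN.le x hx
    have h9 : |s - round s| * x ≤ 1 / 40 * 4 := by
      refine mul_le_mul (by linarith) (by linarith [hx.2]) hx.1 (by norm_num)
    have := abs_sub_le (s * u s x) (sin (s * x)) (sin ((round s : ℤ) * x))
    linarith
  have hround : ∀ s : ℝ, N < |s| → s - 1 / 2 ≤ round s ∧ (round s : ℝ) ≤ s + 1 / 2 := fun s _ => by
    have := abs_le.1 (abs_sub_round s)
    constructor <;> linarith
  have hr0 : round s ≠ 0 := by
    intro h0
    have := abs_sub_round s
    rw [h0] at this
    simp only [Int.cast_zero, sub_zero] at this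
    linarith
  have hsq := (h s).sq_eq_of_close (h t) (κ := s) (κ' := t) (η := 3 / 20) (M := 1) (hu0 s) (hu0 t)
    hs ht (g := fun x => sin ((round s : ℤ) * x)) (by fun_prop) (fun x _ => abs_sin_le_one _)
    (hclose s hs hsN) (by rw [hst]; exact hclose t ht htN)
    (by rw [integral_sin_int_mul_sq hr0]; nlinarith)
  rcases sq_eq_sq_iff_eq_or_eq_neg.1 hsq with h1 | h1
  · exact h1
  · -- `s = -t` is impossible, as both have the sign of their common nonzero rounding
    exfalso
    obtain ⟨a1, a2⟩ := hround s hsN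
    obtain ⟨b1, b2⟩ := hround t htN
    rw [hst] at a1 a2
    rcases lt_abs.1 hsN with h2 | h2 <;> linarith

lemma exists_zero_near (hP : ∀ x ∈ Set.Icc 0 π, |p x| ≤ P)
    (h : ∀ s, RightSol p s (u s) (v s)) (hu0 : ∀ s, u s 0 = 0) (hv0 : ∀ s, v s 0 = 1)
    {N : ℝ} (hN : 1 ≤ N)
    (has : ∀ s, N ≤ |s| → ∀ x ∈ Set.Icc 0 π, |s * u s x - sin (s * x)| ≤ 1 / 20)
    {a : ℝ} (ha : N + 3 ≤ |a|) : ∃ s ∈ {s | u s π = 0}, |s - a| ≤ 2 := by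
  set n : ℤ := ⌊a⌋
  have hn1 : (n : ℝ) ≤ a := Int.floor_le a
  have hn2 : a < n + 1 := Int.lt_floor_add_one a
  have hpimem : π ∈ Set.Icc 0 π := ⟨pi_pos.le, le_rfl⟩
  have hbig : ∀ s ∈ Set.Icc ((n : ℝ) - 1 / 2) (n + 1 / 2), N ≤ |s| := by
    intro s hs
    have h1 : |a| ≤ |s| + |a - s| := by
      have := abs_add_le s (a - s); simpa using this
    have h2 : |a - s| ≤ 2 := abs_le.2 ⟨by linarith [hs.2], by linarith [hs.1]⟩
    linarith
  have hcont : Continuous (fun s => s * u s π) := by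
    refine continuous_id.mul (continuous_iff_continuousAt.2 fun t => ?_)
    rw [Metric.continuousAt_iff']
    intro ε hε
    filter_upwards [eventually_close hP h hu0 hv0 t (half_pos hε)] with s hs
    rw [Real.dist_eq]
    linarith [hs π hpimem]
  have e1 : sin (((n : ℝ) - 1 / 2) * π) = (-1) ^ n * -1 := by
    rw [show ((n : ℝ) - 1 / 2) * π = -(π / 2) + n * π by ring, sin_add_int_mul_pi, sin_neg,
      sin_pi_div_two]
  have e2 : sin (((n : ℝ) + 1 / 2) * π) = (-1) ^ n * 1 := by
    rw [show ((n : ℝ) + 1 / 2) * π = π / 2 + n * π by ring, sin_add_int_mul_pi, sin_pi_div_two]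
  have f1 := abs_le.1 (has _ (hbig _ ⟨le_rfl, by linarith⟩) π hpimem)
  have f2 := abs_le.1 (has _ (hbig _ ⟨by linarith, le_rfl⟩) π hpimem)
  rw [e1] at f1
  rw [e2] at f2
  have h0 : (0 : ℝ) ∈ Set.uIcc (((n : ℝ) - 1 / 2) * u ((n : ℝ) - 1 / 2) π)
      (((n : ℝ) + 1 / 2) * u ((n : ℝ) + 1 / 2) π) := by
    rw [Set.mem_uIcc]
    rcases Int.even_or_odd n with hev | hodd
    · rw [hev.neg_one_zpow] at f1 f2
      left; constructor <;> linarith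
    · rw [hodd.neg_one_zpow] at f1 f2
      right; constructor <;> linarith
  obtain ⟨s, hs, hs0⟩ := intermediate_value_uIcc hcont.continuousOn h0
  rw [Set.uIcc_of_le (by linarith)] at hs
  have hsN := hbig s hs
  have hs0' : s ≠ 0 := by
    rintro rfl
    simp at hsN; linarith
  refine ⟨s, (mul_eq_zero.1 hs0).resolve_left hs0', ?_⟩
  exact abs_le.2 ⟨by linarith [hs.1], by linarith [hs.2]⟩

/-- The accuracy `1/20` leaves room in both uses: it is below `|sin|` at half-integer multiples of
`π`, and small enough for the orthogonality argument in `zeros_round_inj`. -/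
lemma exists_asymp_threshold (hP : ∀ x ∈ Set.Icc 0 π, |p x| ≤ P)
    (h : ∀ s, RightSol p s (u s) (v s)) (hu0 : ∀ s, u s 0 = 0) (hv0 : ∀ s, v s 0 = 1) :
    ∃ N : ℝ, 1 ≤ N ∧
      ∀ s, N ≤ |s| → ∀ x ∈ Set.Icc 0 π, |s * u s x - sin (s * x)| ≤ 1 / 20 := by
  have hP0 : 0 ≤ P := (abs_nonneg _).trans (hP 0 ⟨le_rfl, pi_pos.le⟩)
  have hE : 0 ≤ 80 * P * exp π := by positivity
  refine ⟨1 + 2 * P + 80 * P * exp π, by linarith, fun s hs x hx => ?_⟩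
  refine ((h s).asymp hP (hu0 s) (hv0 s) (by linarith) hx).trans ?_
  have hs0 : 0 < |s| := by linarith
  rw [div_mul_eq_mul_div, div_le_iff₀ hs0]
  linarith

end Zeros

/-! ### The potential and the gaps -/

lemma step_continuousWithinAt (a b : ℝ) (m : ℕ) (x : ℝ) :
    ContinuousWithinAt (fun x => if a ≤ x then b * (x - a) ^ m / (m.factorial : ℝ) else 0)
      (Set.Ici x) x := by
  by_cases hx : a ≤ x
  · have hc : Continuous (fun x : ℝ => b * (x - a) ^ m / (m.factorial : ℝ)) := by fun_prop
    exact hc.continuousWithinAt.congr (fun z hz => if_pos (hx.trans hz)) (if_pos hx)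
  · refine ContinuousAt.continuousWithinAt ?_
    refine (continuousAt_const (y := (0 : ℝ))).congr ?_
    filter_upwards [gt_mem_nhds (not_le.1 hx)] with z hz
    rw [if_neg (not_le.2 hz)]

lemma step_measurable (a b : ℝ) (m : ℕ) :
    Measurable (fun x : ℝ => if a ≤ x then b * (x - a) ^ m / (m.factorial : ℝ) else 0) :=
  Measurable.ite measurableSet_Ici (by fun_prop) measurable_const

lemma step_abs_le {a : ℝ} (ha : 0 < a) (b : ℝ) (m : ℕ) {x : ℝ} (hx : x ∈ Set.Icc 0 π) :
    |if a ≤ x then b * (x - a) ^ m / (m.factorial : ℝ) else 0|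
      ≤ |b| * π ^ m / (m.factorial : ℝ) := by
  split_ifs with h
  · rw [abs_div, abs_mul, abs_pow, abs_of_nonneg (sub_nonneg.2 h), Nat.abs_cast]
    gcongr
    linarith [hx.2]
  · rw [abs_zero]; positivity

/-- The gaps `d_l`, listed twice, tile `[0, π]`. -/
lemma gaps_sum {J : ℕ} {ω d : ℕ → ℝ} (hω0 : ω 0 = 0) (hωtop : ω (J + 1) = π / 2)
    (hd1 : ∀ l : ℕ, 1 ≤ l → l ≤ J + 1 → d l = ω l - ω (l - 1))
    (hd2 : ∀ l : ℕ, J + 2 ≤ l → l ≤ 2 * J + 2 → d l = d (2 * J + 3 - l)) :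
    ∑ l : Fin (2 * J + 2), d ((l : ℕ) + 1) = π := by
  have h1 : ∑ i ∈ Finset.range (J + 1), d (i + 1) = π / 2 := by
    rw [Finset.sum_congr rfl (fun i hi => hd1 (i + 1) (by omega)
      (by have := Finset.mem_range.1 hi; omega))]
    simp only [Nat.add_sub_cancel]
    rw [Finset.sum_range_sub, hω0, hωtop, sub_zero]
  have h2 : ∑ i ∈ Finset.range (J + 1), d (J + 1 + i + 1)
      = ∑ i ∈ Finset.range (J + 1), d (i + 1) := by
    rw [← Finset.sum_range_reflect (fun i => d (i + 1))]
    refine Finset.sum_congr rfl fun i hi => ?_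
    have := Finset.mem_range.1 hi
    rw [hd2 _ (by omega) (by omega)]
    congr 1; omega
  rw [Fin.sum_univ_eq_sum_range (fun i => d (i + 1)) (2 * J + 2),
    show 2 * J + 2 = (J + 1) + (J + 1) by ring, Finset.sum_range_add, h2, h1]
  ring

lemma gaps_pos {J : ℕ} {ω d : ℕ → ℝ} (hωmono : ∀ l : ℕ, l ≤ J → ω l < ω (l + 1))
    (hd1 : ∀ l : ℕ, 1 ≤ l → l ≤ J + 1 → d l = ω l - ω (l - 1))
    (hd2 : ∀ l : ℕ, J + 2 ≤ l → l ≤ 2 * J + 2 → d l = d (2 * J + 3 - l))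
    (l : Fin (2 * J + 2)) : 0 < d ((l : ℕ) + 1) := by
  have h1 : ∀ l : ℕ, 1 ≤ l → l ≤ J + 1 → 0 < d l := by
    intro l hl1 hl2
    rw [hd1 l hl1 hl2]
    have := hωmono (l - 1) (by omega)
    rw [Nat.sub_add_cancel hl1] at this
    linarith
  have hl := l.2
  rcases Nat.lt_or_ge (l : ℕ) (J + 1) with h | h
  · exact h1 _ (by omega) (by omega)
  · rw [hd2 _ (by omega) (by omega)]
    exact h1 _ (by omega) (by omega)

/-- **Sub-density theorem.**  Let `M ≥ 3` be odd and let
`p x = r x + ∑_{m=0}^{M} ∑_{k} c m k • 1_{[xs m k, ∞)}(x) (x − xs m k)^m / m!`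
with `r ∈ C^M[0,π]`, nonzero jumps `c m k`, and pairwise distinct singular points
`xs m k ∈ (0, π/2)`; let `J` be the total number of singular points and let
`0 = ω 0 < ω 1 < … < ω J < ω (J+1) = π/2` be their increasing rearrangement together
with the endpoints, and let `d l` be the gaps (reflected symmetrically for
`l = J+2, …, 2J+2`).  Then the real zeros of `ω ↦ y(π;ω)` split into `2J+2` families
`(z l n)` over `n : ℤ`, with `z l n = nπ / d l + O(1)` uniformly, whose union exhausts
all the real zeros. -/
theorem sub_density_theorem
    (M : ℕ) (hM3 : 3 ≤ M) (hModd : Odd M)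
    (K : Fin (M + 1) → ℕ)
    (c : (m : Fin (M + 1)) → Fin (K m) → ℝ)
    (xs : (m : Fin (M + 1)) → Fin (K m) → ℝ)
    (hc : ∀ m k, c m k ≠ 0)
    (hxs : ∀ m k, xs m k ∈ Set.Ioo (0 : ℝ) (Real.pi / 2))
    (hdist : Function.Injective
      (fun q : Σ m : Fin (M + 1), Fin (K m) => xs q.1 q.2))
    (r : ℝ → ℝ) (hr : ContDiffOn ℝ M r (Set.Icc (0 : ℝ) Real.pi))
    (p : ℝ → ℝ)
    (hp : ∀ x : ℝ, p x = r x +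
      ∑ m : Fin (M + 1), ∑ k : Fin (K m),
        (if xs m k ≤ x then c m k * (x - xs m k) ^ (m : ℕ) / (Nat.factorial m) else 0))
    (J : ℕ) (hJ : J = ∑ m : Fin (M + 1), K m)
    (ω : ℕ → ℝ) (hω0 : ω 0 = 0) (hωtop : ω (J + 1) = Real.pi / 2)
    (hωmono : ∀ l : ℕ, l ≤ J → ω l < ω (l + 1))
    (hωmem : ∀ j : ℕ, 1 ≤ j → j ≤ J → ∃ m k, xs m k = ω j)
    (hωsurj : ∀ m k, ∃ j : ℕ, 1 ≤ j ∧ j ≤ J ∧ ω j = xs m k)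
    (d : ℕ → ℝ)
    (hd1 : ∀ l : ℕ, 1 ≤ l → l ≤ J + 1 → d l = ω l - ω (l - 1))
    (hd2 : ∀ l : ℕ, J + 2 ≤ l → l ≤ 2 * J + 2 → d l = d (2 * J + 3 - l))
    (y yd : ℂ → ℝ → ℂ)
    (hy : ∀ w : ℂ, IsSLSolution p w (y w) (yd w)) :
    ∃ z : Fin (2 * J + 2) → ℤ → ℝ, ∃ C > (0 : ℝ),
      (∀ l : Fin (2 * J + 2), ∀ n : ℤ, y ((z l n : ℝ) : ℂ) Real.pi = 0) ∧
      (∀ l : Fin (2 * J + 2), ∀ n : ℤ,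
        |z l n - (n : ℝ) * Real.pi / d ((l : ℕ) + 1)| ≤ C) ∧
      (∀ x : ℝ, y ((x : ℝ) : ℂ) Real.pi = 0 →
        ∃ l : Fin (2 * J + 2), ∃ n : ℤ, z l n = x) := by
  have hpi := pi_pos
  -- the potential is bounded, integrable and right-continuous
  have hrc : ContinuousOn r (Set.Icc 0 π) := hr.continuousOn
  have hp' : p = fun x => r x + ∑ m : Fin (M + 1), ∑ k : Fin (K m),
      (if xs m k ≤ x then c m k * (x - xs m k) ^ (m : ℕ) / (Nat.factorial m) else 0) := funext hp
  obtain ⟨P, hP⟩ : ∃ P, ∀ x ∈ Set.Icc 0 π, |p x| ≤ P := by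
    obtain ⟨B, hB⟩ := isCompact_Icc.exists_bound_of_continuousOn hrc
    refine ⟨B + ∑ m : Fin (M + 1), ∑ k : Fin (K m),
      |c m k| * π ^ (m : ℕ) / (Nat.factorial m), fun x hx => ?_⟩
    rw [hp]
    refine (abs_add_le _ _).trans (add_le_add (hB x hx) ?_)
    refine (Finset.abs_sum_le_sum_abs _ _).trans (Finset.sum_le_sum fun m _ => ?_)
    refine (Finset.abs_sum_le_sum_abs _ _).trans (Finset.sum_le_sum fun k _ => ?_)
    exact step_abs_le (hxs m k).1 _ _ hx
  have hcont : ∀ x ∈ Set.Ico 0 π, ContinuousWithinAt p (Set.Ici x) x := by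
    intro x hx
    rw [hp']
    refine ContinuousWithinAt.add ?_ ?_
    · exact (hrc x (Set.Ico_subset_Icc_self hx)).mono_of_mem_nhdsWithin
        (Filter.mem_of_superset (Icc_mem_nhdsGE hx.2) (Set.Icc_subset_Icc_left hx.1))
    · exact tendsto_finsetSum _ fun m _ => tendsto_finsetSum _ fun k _ =>
        step_continuousWithinAt (xs m k) (c m k) m x
  have hpint : IntervalIntegrable p volume 0 π := by
    rw [intervalIntegrable_iff_integrableOn_Icc_of_le hpi.le]
    refine Integrable.of_bound (C := P) ?_ ((ae_restrict_iff' measurableSet_Icc).2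
      (Filter.Eventually.of_forall hP))
    rw [hp']
    refine (hrc.aestronglyMeasurable measurableSet_Icc).add (Measurable.aestronglyMeasurable ?_)
    exact Finset.measurable_fun_sum _ fun m _ => Finset.measurable_fun_sum _ fun k _ =>
      step_measurable (xs m k) (c m k) m
  choose u v hsol hu0 hv0 hzero using fun s : ℝ => (hy (s : ℂ)).exists_rightSol hP hcont hpint
  obtain ⟨N, hN, has⟩ := exists_asymp_threshold hP hsol hu0 hv0
  -- numbers with `|a| < N + 3` share the zero near `N + 3`
  have hdense : ∀ a : ℝ, ∃ x ∈ {s | u s π = 0}, |x - a| ≤ 2 * N + 8 := by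
    intro a
    by_cases ha : N + 3 ≤ |a|
    · obtain ⟨s, hs, hsa⟩ := exists_zero_near hP hsol hu0 hv0 hN has ha
      exact ⟨s, hs, by linarith⟩
    · obtain ⟨s, hs, hsa⟩ := exists_zero_near hP hsol hu0 hv0 hN has
        (a := N + 3) (le_abs_self _)
      refine ⟨s, hs, ?_⟩
      have h1 := abs_le.1 hsa
      have h2 := abs_lt.1 (not_le.1 ha)
      exact abs_le.2 ⟨by linarith, by linarith⟩
  have hψ := exists_injOn_int hN (zeros_finite hP hsol hu0 hv0 N)
    (fun x hx x' hx' h h' hxx => zeros_round_inj hu0 hsol hN has hx hx' h h' hxx)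
  obtain ⟨z, C, hC, hz, hzC, hzsurj⟩ := exists_families
    (fun l : Fin (2 * J + 2) => d ((l : ℕ) + 1) / π)
    (fun l => div_pos (gaps_pos hωmono hd1 hd2 l) hpi)
    (by rw [← Finset.sum_div, gaps_sum hω0 hωtop hd1 hd2, div_self hpi.ne']) hdense hψ
  refine ⟨z, C, hC, fun l n => (hzero _).2 (hz l n), fun l n => ?_,
    fun x hx => hzsurj x ((hzero x).1 hx)⟩
  have := hzC l n
  rwa [div_div_eq_mul_div] at this
end

section
/- Let p : [0,π] → ℝ be integrable and bounded, and for each ω ∈ ℂ let y(·;ω) : [0,π] → ℂ be the solution of −y'' + p·y = ω²·y on (0,π) with initial conditions y(0;ω) = 0 and y'(0;ω) = 1. Then the real zeros of ω ↦ y(π;ω), listed in increasing order as a two-sided sequence (z_n)_{n ∈ ℤ} symmetric about 0 (zeros come in pairs ±z since y(π;ω) depends only on ω²), satisfy z_n = n + O(1); that is, there exists a constant C > 0 such that | z_n − n | ≤ C for all n ∈ ℤ. -/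
/-!
For real `ω` the solution `y(·;ω)` is real and depends only on `ω²`, so the real zeros of
`ω ↦ y(π;ω)` form a symmetric set `Z`. The proof counts them with two facts.

* Asymptotics (`RealSolution.abs_sub_sin_le`): `ω y(x;ω) = sin (ω x) + O(1/ω)` uniformly in `x`, from
  the variation-of-constants formula.
* Orthogonality (`RealSolution.integral_mul_eq_zero`): if `y(π;a) = y(π;b) = 0` and `a² ≠ b²`, then
  `∫₀^π y(x;a) y(x;b) dx = 0`.

Orthogonality prevents zeros from being too close, since solutions with nearby parameters are
uniformly close and hence have positive inner product. With continuous dependence on `ω` this makes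
`Z` locally finite (`zeros_inter_Icc_finite`). With the asymptotics it shows that at most one
zero lies within `1/2` of a large integer `n`, and the sign change of `sin (ω π)` across `n` provides
one (`exists_unique_zero_near`).

A locally finite subset of `ℝ` unbounded in both directions is order isomorphic to `ℤ`. For large
indices the enumeration must run through the zeros near consecutive integers, so it differs from the
identity by a bounded amount; symmetry gives the same for large negative indices, and only finitely
many indices remain (`exists_enumeration`).
-/

open Real MeasureTheory

/-! ### Integration by parts and Grönwall -/

/-- Integration by parts for indefinite integrals of merely integrable functions, in the product-rule
form. The potential is only integrable, so `y'` need not be differentiable everywhere. -/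
theorem integral_by_parts_primitive {f g F G : ℝ → ℝ} {a b : ℝ} (hab : a ≤ b)
    (hF : IntervalIntegrable F volume a b) (hG : IntervalIntegrable G volume a b)
    (hf : ∀ x ∈ Set.Icc a b, f x = f a + ∫ t in a..x, F t)
    (hg : ∀ x ∈ Set.Icc a b, g x = g a + ∫ t in a..x, G t) :
    ∫ t in a..b, (F t * g t + f t * G t) = f b * g b - f a * g a := by
  have key : ∀ {f F : ℝ → ℝ}, IntervalIntegrable F volume a b →
      AbsolutelyContinuousOnInterval (fun x => f a + ∫ t in a..x, F t) a b := by
    intro f F hF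
    exact (LipschitzOnWith.absolutelyContinuousOnInterval (K := 0)
      (LipschitzWith.const (f a)).lipschitzOnWith).fun_add
      (hF.absolutelyContinuousOnInterval_intervalIntegral (c := a) (by simp))
  have h := (key (f := f) hF).integral_deriv_mul_eq_sub (key (f := g) hG)
  have hb : b ∈ Set.Icc a b := ⟨hab, le_rfl⟩
  simp only [← hf b hb, ← hg b hb, intervalIntegral.integral_same, add_zero] at h
  rw [← h]
  apply intervalIntegral.integral_congr_ae
  filter_upwards [hF.ae_hasDerivAt_integral, hG.ae_hasDerivAt_integral] with x h1 h2 hx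
  have hx' : x ∈ Set.uIcc a b := Set.uIoc_subset_uIcc hx
  have hx'' : x ∈ Set.Icc a b := by rwa [Set.uIcc_of_le hab] at hx'
  rw [((h1 hx' a (by simp)).const_add (f a)).deriv, ((h2 hx' a (by simp)).const_add (g a)).deriv,
    ← hf x hx'', ← hg x hx'']

/-- A second-order Grönwall inequality. Integrating the bound on `u' = v` gives
`‖u x‖ ≤ π (ε + K ∫₀ˣ ‖u‖)`, and the usual Grönwall inequality applies to the primitive of `‖u‖`. -/
theorem norm_le_of_deriv_le_integral {E : Type*} [NormedAddCommGroup E] [NormedSpace ℝ E]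
    {u v : ℝ → E} {K ε : ℝ} (hK : 0 < K) (h0 : u 0 = 0)
    (hd : ∀ x ∈ Set.Icc 0 π, HasDerivWithinAt u (v x) (Set.Icc 0 π) x)
    (hb : ∀ x ∈ Set.Icc 0 π, ‖v x‖ ≤ ε + K * ∫ t in (0:ℝ)..x, ‖u t‖) :
    ∀ x ∈ Set.Icc 0 π, ‖u x‖ ≤ π * exp (π ^ 2 * K) * ε := by
  have hcont : ContinuousOn u (Set.Icc 0 π) := fun x hx => (hd x hx).continuousWithinAt
  -- a globally continuous extension of `‖u‖`, so that its primitive is differentiable everywhere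
  set g : ℝ → ℝ := Set.IccExtend pi_pos.le ((Set.Icc 0 π).domRestrict fun t => ‖u t‖) with hg
  have hgc : Continuous g := (continuousOn_iff_continuous_domRestrict.1 hcont.norm).Icc_extend'
  have hgu : ∀ t ∈ Set.Icc 0 π, g t = ‖u t‖ := fun t ht => by
    rw [hg, Set.IccExtend_of_mem _ _ ht]; rfl
  have hg0 : ∀ t, 0 ≤ g t := fun t => norm_nonneg _
  set U : ℝ → ℝ := fun x => ∫ t in (0:ℝ)..x, g t with hU
  have hUu : ∀ x ∈ Set.Icc 0 π, ∫ t in (0:ℝ)..x, ‖u t‖ = U x := fun x hx => by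
    refine intervalIntegral.integral_congr fun t ht => ?_
    rw [Set.uIcc_of_le hx.1] at ht
    exact (hgu t ⟨ht.1, ht.2.trans hx.2⟩).symm
  have hUd : ∀ x, HasDerivAt U (g x) x := fun x => (hgc.integral_hasStrictDerivAt 0 x).hasDerivAt
  have hUm : Monotone U := monotone_of_deriv_nonneg (fun x => (hUd x).differentiableAt)
    (fun x => by rw [(hUd x).deriv]; exact hg0 x)
  have hU0 : U 0 = 0 := by simp [hU]
  have hUnn : ∀ x ∈ Set.Icc 0 π, 0 ≤ U x := fun x hx => hU0 ▸ hUm hx.1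
  have hux : ∀ x ∈ Set.Icc 0 π, ‖u x‖ ≤ π * (ε + K * U x) := by
    intro x hx
    have h1 := norm_image_sub_le_of_norm_deriv_le_segment' (f := u) (f' := v) (a := 0) (b := x)
      (C := ε + K * U x)
      (fun t ht => (hd t ⟨ht.1, ht.2.trans hx.2⟩).mono (Set.Icc_subset_Icc_right hx.2))
      (fun t ht => by
        have ht' : t ∈ Set.Icc 0 π := ⟨ht.1, ht.2.le.trans hx.2⟩
        refine (hb t ht').trans ?_
        rw [hUu t ht']
        have := hUm ht.2.le
        gcongr) x ⟨hx.1, le_rfl⟩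
    rw [h0, sub_zero, sub_zero] at h1
    have h2 : 0 ≤ ε + K * U x := by
      have := hb x hx
      rw [hUu x hx] at this
      exact (norm_nonneg _).trans this
    nlinarith [hx.2]
  have hε : 0 ≤ ε := by
    have := hb 0 ⟨le_rfl, pi_pos.le⟩
    simp at this
    exact (norm_nonneg _).trans this
  intro x hx
  have hgr := norm_le_gronwallBound_of_norm_deriv_right_le (f := U) (f' := g) (δ := 0)
    (K := π * K) (ε := π * ε) (a := 0) (b := π)
    (fun x _ => (hUd x).continuousAt.continuousWithinAt) (fun x _ => (hUd x).hasDerivWithinAt)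
    (by simp [hU0])
    (fun x hx => by
      have hx' : x ∈ Set.Icc 0 π := ⟨hx.1, hx.2.le⟩
      rw [Real.norm_of_nonneg (hg0 x), Real.norm_of_nonneg (hUnn x hx'), hgu x hx']
      linarith [hux x hx']) x hx
  rw [gronwallBound_of_K_ne_0 (by positivity), Real.norm_of_nonneg (hUnn x hx)] at hgr
  have h3 : exp (π * K * (x - 0)) ≤ exp (π ^ 2 * K) := by
    apply Real.exp_le_exp.2
    have := hx.2
    have := mul_le_mul_of_nonneg_left hx.2 (by positivity : 0 ≤ π * K)
    nlinarith
  have h4 : K * U x ≤ ε * (exp (π ^ 2 * K) - 1) := by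
    calc K * U x ≤ K * (0 * exp (π * K * (x - 0)) + π * ε / (π * K) * (exp (π * K * (x - 0)) - 1)) := by
          gcongr
      _ = ε * (exp (π * K * (x - 0)) - 1) := by
          have := pi_pos
          field_simp
          ring
      _ ≤ _ := by gcongr
  calc ‖u x‖ ≤ π * (ε + K * U x) := hux x hx
    _ ≤ π * (ε + ε * (exp (π ^ 2 * K) - 1)) := by gcongr
    _ = _ := by ring

/-! ### Continuous dependence, reality, orthogonality and asymptotics of solutions -/

/-- Solutions depend on the spectral parameter `ω²` in a locally Lipschitz way, uniformly on
`[0,π]`: the difference `d` of two solutions satisfies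
`d'' = (p - ω²) d - (ω² - ω₀²) y₀` with vanishing initial data. -/
theorem norm_sub_le_of_isSLSolution {p : ℝ → ℝ} {B : ℝ}
    (hp : IntervalIntegrable p volume 0 Real.pi) (hB : ∀ x ∈ Set.Icc 0 Real.pi, |p x| ≤ B)
    {ω₀ : ℂ} {y₀ v₀ : ℝ → ℂ} (h₀ : IsSLSolution p ω₀ y₀ v₀) (R : ℝ) :
    ∃ L : ℝ, ∀ (ω : ℂ) (y v : ℝ → ℂ), IsSLSolution p ω y v → ‖ω ^ 2‖ ≤ R →
      ∀ x ∈ Set.Icc 0 Real.pi, ‖y x - y₀ x‖ ≤ L * ‖ω ^ 2 - ω₀ ^ 2‖ := by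
  have hcont : ∀ {ω : ℂ} {y v : ℝ → ℂ}, IsSLSolution p ω y v → ContinuousOn y (Set.Icc 0 π) :=
    fun h x hx => (h.2.1 x hx).continuousWithinAt
  obtain ⟨M, hM⟩ := isCompact_Icc.exists_bound_of_continuousOn (hcont h₀)
  have hM0 : 0 ≤ M := (norm_nonneg _).trans (hM 0 ⟨le_rfl, pi_pos.le⟩)
  have hB0 : 0 ≤ B := (abs_nonneg _).trans (hB 0 ⟨le_rfl, pi_pos.le⟩)
  refine ⟨π * Real.exp (π ^ 2 * (B + R + 1)) * (π * M), fun ω y v h hR => ?_⟩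
  have hR0 : 0 ≤ R := (norm_nonneg _).trans hR
  have hsub : ∀ x ∈ Set.Icc 0 π, Set.uIcc 0 x ⊆ Set.Icc 0 π := fun x hx => by
    rw [Set.uIcc_of_le hx.1]; exact Set.Icc_subset_Icc_right hx.2
  have hint : ∀ {ω : ℂ} {y v : ℝ → ℂ}, IsSLSolution p ω y v → ∀ x ∈ Set.Icc 0 π,
      IntervalIntegrable (fun t => ((p t : ℂ) - ω ^ 2) * y t) volume 0 x := by
    intro ω y v h x hx
    refine IntervalIntegrable.mul_continuousOn ?_ ((hcont h).mono (hsub x hx))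
    refine IntervalIntegrable.sub ?_ intervalIntegrable_const
    have hpx := hp.mono_set ((hsub x hx).trans (Set.uIcc_of_le pi_pos.le).ge)
    exact ⟨hpx.1.ofReal, hpx.2.ofReal⟩
  have hd : ContinuousOn (fun t => ‖y t - y₀ t‖) (Set.Icc 0 π) := ((hcont h).sub (hcont h₀)).norm
  have := norm_le_of_deriv_le_integral (u := fun t => y t - y₀ t) (v := fun t => v t - v₀ t)
    (K := B + R + 1) (ε := π * M * ‖ω ^ 2 - ω₀ ^ 2‖) (by positivity) (by simp [h.1, h₀.1])
    (fun x hx => (h.2.1 x hx).sub (h₀.2.1 x hx))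
    (fun x hx => by
      have hdi : IntervalIntegrable (fun t => (B + R + 1) * ‖y t - y₀ t‖) volume 0 x :=
        ((hd.mono (hsub x hx)).const_mul _).intervalIntegrable
      rw [h.2.2 x hx, h₀.2.2 x hx, add_sub_add_left_eq_sub,
        ← intervalIntegral.integral_sub (hint h x hx) (hint h₀ x hx)]
      refine (intervalIntegral.norm_integral_le_of_norm_le hx.1
        (g := fun t => (B + R + 1) * ‖y t - y₀ t‖ + M * ‖ω ^ 2 - ω₀ ^ 2‖)
        (Filter.Eventually.of_forall fun t ht => ?_)
        (hdi.add intervalIntegrable_const)).trans ?_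
      · have ht' : t ∈ Set.Icc 0 π := ⟨ht.1.le, ht.2.trans hx.2⟩
        calc ‖((p t : ℂ) - ω ^ 2) * y t - ((p t : ℂ) - ω₀ ^ 2) * y₀ t‖
            = ‖((p t : ℂ) - ω ^ 2) * (y t - y₀ t) - y₀ t * (ω ^ 2 - ω₀ ^ 2)‖ := by
              congr 1; ring
          _ ≤ (‖(p t : ℂ)‖ + ‖ω ^ 2‖) * ‖y t - y₀ t‖ + ‖y₀ t‖ * ‖ω ^ 2 - ω₀ ^ 2‖ := by
              refine (norm_sub_le _ _).trans ?_
              rw [norm_mul, norm_mul]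
              gcongr
              exact norm_sub_le _ _
          _ ≤ _ := by
              have h1 : ‖(p t : ℂ)‖ ≤ B := by simpa using hB t ht'
              have h2 := hM t ht'
              have h3 : ‖(p t : ℂ)‖ + ‖ω ^ 2‖ ≤ B + R + 1 := by linarith
              gcongr
      · rw [intervalIntegral.integral_add hdi intervalIntegrable_const,
          intervalIntegral.integral_const_mul, intervalIntegral.integral_const, smul_eq_mul,
          sub_zero]
        have : x * (M * ‖ω ^ 2 - ω₀ ^ 2‖) ≤ π * (M * ‖ω ^ 2 - ω₀ ^ 2‖) := by
          have := hx.2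
          gcongr
        linarith)
  intro x hx
  exact (this x hx).trans (by linarith)

/-- Uniqueness for the initial value problem; only `ω²` enters. -/
theorem eqOn_of_isSLSolution {p : ℝ → ℝ} {B : ℝ}
    (hp : IntervalIntegrable p volume 0 Real.pi) (hB : ∀ x ∈ Set.Icc 0 Real.pi, |p x| ≤ B)
    {ω₁ ω₂ : ℂ} (hω : ω₁ ^ 2 = ω₂ ^ 2) {y₁ v₁ y₂ v₂ : ℝ → ℂ} (h₁ : IsSLSolution p ω₁ y₁ v₁)
    (h₂ : IsSLSolution p ω₂ y₂ v₂) : Set.EqOn y₁ y₂ (Set.Icc 0 Real.pi) := by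
  obtain ⟨L, hL⟩ := norm_sub_le_of_isSLSolution hp hB h₂ ‖ω₁ ^ 2‖
  intro x hx
  have := hL ω₁ y₁ v₁ h₁ le_rfl x hx
  rw [hω, sub_self, norm_zero, mul_zero] at this
  exact sub_eq_zero.1 (norm_le_zero_iff.1 this)

/-- `RealSolution p ω u v` is the real-valued analogue of `IsSLSolution`, for a real parameter `ω`:
`u` solves `-u'' + p u = ω² u`, `u 0 = 0`, `u' 0 = 1` on `[0,π]`, in integrated form, with `u' = v`. -/
structure RealSolution (p : ℝ → ℝ) (ω : ℝ) (u v : ℝ → ℝ) : Prop where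
  zero : u 0 = 0
  hasDeriv : ∀ x ∈ Set.Icc 0 Real.pi, HasDerivWithinAt u (v x) (Set.Icc 0 Real.pi) x
  eq : ∀ x ∈ Set.Icc 0 Real.pi, v x = 1 + ∫ t in (0 : ℝ)..x, (p t - ω ^ 2) * u t

/-- For real `ω` the solution is real: its complex conjugate solves the same initial value problem. -/
theorem IsSLSolution.ofReal_re {p : ℝ → ℝ} {B : ℝ}
    (hp : IntervalIntegrable p volume 0 Real.pi) (hB : ∀ x ∈ Set.Icc 0 Real.pi, |p x| ≤ B)
    {ω : ℝ} {y v : ℝ → ℂ} (h : IsSLSolution p ω y v) :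
    ∀ x ∈ Set.Icc 0 Real.pi, ((y x).re : ℂ) = y x := by
  have hconj : IsSLSolution p ω (fun x => (starRingEnd ℂ) (y x))
      (fun x => (starRingEnd ℂ) (v x)) := by
    refine ⟨by simp [h.1], fun x hx => ?_, fun x hx => ?_⟩
    · exact (Complex.conjCLE.toContinuousLinearMap.hasFDerivAt).comp_hasDerivWithinAt x
        (h.2.1 x hx)
    · simp only
      rw [h.2.2 x hx, map_add, map_one, intervalIntegral.integral_of_le hx.1,
        intervalIntegral.integral_of_le hx.1, ← integral_conj]
      simp
  intro x hx
  exact Complex.conj_eq_iff_re.1 (eqOn_of_isSLSolution hp hB rfl hconj h hx)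

theorem IsSLSolution.realSolution {p : ℝ → ℝ} {B : ℝ}
    (hp : IntervalIntegrable p volume 0 Real.pi) (hB : ∀ x ∈ Set.Icc 0 Real.pi, |p x| ≤ B)
    {ω : ℝ} {y v : ℝ → ℂ} (h : IsSLSolution p ω y v) :
    RealSolution p ω (fun x => (y x).re) (fun x => (v x).re) := by
  refine ⟨by simp [h.1], fun x hx => ?_, fun x hx => ?_⟩
  · exact (Complex.reCLM.hasFDerivAt).comp_hasDerivWithinAt x (h.2.1 x hx)
  · have : ∫ t in (0 : ℝ)..x, ((p t : ℂ) - (ω : ℂ) ^ 2) * y t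
        = ((∫ t in (0 : ℝ)..x, (p t - ω ^ 2) * (y t).re : ℝ) : ℂ) := by
      rw [← intervalIntegral.integral_ofReal]
      refine intervalIntegral.integral_congr fun t ht => ?_
      rw [Set.uIcc_of_le hx.1] at ht
      have := h.ofReal_re hp hB t ⟨ht.1, ht.2.trans hx.2⟩
      push_cast
      rw [this]
    change (v x).re = _
    rw [h.2.2 x hx, this, ← Complex.ofReal_one, ← Complex.ofReal_add, Complex.ofReal_re]

namespace RealSolution

variable {p : ℝ → ℝ} {ω : ℝ} {u v : ℝ → ℝ}

theorem continuousOn (h : RealSolution p ω u v) : ContinuousOn u (Set.Icc 0 π) :=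
  fun x hx => (h.hasDeriv x hx).continuousWithinAt

theorem intervalIntegrable (hp : IntervalIntegrable p volume 0 Real.pi)
    (h : RealSolution p ω u v) :
    IntervalIntegrable (fun t => (p t - ω ^ 2) * u t) volume 0 π :=
  (hp.sub intervalIntegrable_const).mul_continuousOn
    (by rw [Set.uIcc_of_le pi_pos.le]; exact h.continuousOn)

theorem continuousOn_deriv (hp : IntervalIntegrable p volume 0 Real.pi)
    (h : RealSolution p ω u v) : ContinuousOn v (Set.Icc 0 π) := by
  have h1 := intervalIntegral.continuousOn_primitive_interval
    (intervalIntegrable_iff_integrableOn_Icc_of_le pi_pos.le |>.1 (h.intervalIntegrable hp)|> 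
      fun h => by rwa [← Set.uIcc_of_le pi_pos.le] at h)
  rw [Set.uIcc_of_le pi_pos.le] at h1
  exact (continuousOn_const.add h1).congr h.eq

theorem deriv_zero (h : RealSolution p ω u v) : v 0 = 1 := by
  simpa using h.eq 0 ⟨le_rfl, pi_pos.le⟩

theorem eq_integral (hp : IntervalIntegrable p volume 0 Real.pi) (h : RealSolution p ω u v) :
    ∀ x ∈ Set.Icc 0 π, u x = u 0 + ∫ t in (0 : ℝ)..x, v t := by
  intro x hx
  have hsub : Set.Icc 0 x ⊆ Set.Icc 0 π := Set.Icc_subset_Icc_right hx.2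
  rw [intervalIntegral.integral_eq_sub_of_hasDerivAt_of_le hx.1 (h.continuousOn.mono hsub)
    (fun t ht => (h.hasDeriv t (hsub (Set.Ioo_subset_Icc_self ht))).hasDerivAt
      (Icc_mem_nhds ht.1 (ht.2.trans_le hx.2)))
    (((h.continuousOn_deriv hp).mono hsub).intervalIntegrable_of_Icc hx.1)]
  ring

theorem deriv_eq_integral (h : RealSolution p ω u v) :
    ∀ x ∈ Set.Icc 0 π, v x = v 0 + ∫ t in (0 : ℝ)..x, (p t - ω ^ 2) * u t := by
  intro x hx
  rw [h.eq x hx, h.deriv_zero]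

/-- Orthogonality of Dirichlet eigenfunctions: by Green's identity
`u₁ u₂' - u₁' u₂` grows over `[0,π]` by `(ω₁² - ω₂²) ∫ u₁ u₂`, and it vanishes at both ends. -/
theorem integral_mul_eq_zero (hp : IntervalIntegrable p volume 0 Real.pi)
    {ω₁ ω₂ : ℝ} {u₁ v₁ u₂ v₂ : ℝ → ℝ} (h₁ : RealSolution p ω₁ u₁ v₁)
    (h₂ : RealSolution p ω₂ u₂ v₂) (hne : ω₁ ^ 2 ≠ ω₂ ^ 2) (hz₁ : u₁ π = 0) (hz₂ : u₂ π = 0) :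
    ∫ t in (0 : ℝ)..π, u₁ t * u₂ t = 0 := by
  have hc := Set.uIcc_of_le pi_pos.le
  have i₁ : IntervalIntegrable v₁ volume 0 π :=
    (h₁.continuousOn_deriv hp).intervalIntegrable_of_Icc pi_pos.le
  have i₂ : IntervalIntegrable v₂ volume 0 π :=
    (h₂.continuousOn_deriv hp).intervalIntegrable_of_Icc pi_pos.le
  have c₁ := h₁.continuousOn
  have c₂ := h₂.continuousOn
  have d₁ := h₁.continuousOn_deriv hp
  have d₂ := h₂.continuousOn_deriv hp
  have e₁ := integral_by_parts_primitive pi_pos.le i₁ (h₂.intervalIntegrable hp)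
    (h₁.eq_integral hp) h₂.deriv_eq_integral
  have e₂ := integral_by_parts_primitive pi_pos.le i₂ (h₁.intervalIntegrable hp)
    (h₂.eq_integral hp) h₁.deriv_eq_integral
  have e : ∫ t in (0 : ℝ)..π, (ω₁ ^ 2 - ω₂ ^ 2) * (u₁ t * u₂ t) = 0 := by
    rw [hz₁, h₁.zero] at e₁
    rw [hz₂, h₂.zero] at e₂
    rw [← hc] at c₁ c₂ d₁ d₂
    have := intervalIntegral.integral_sub
      ((i₁.mul_continuousOn d₂).add ((h₂.intervalIntegrable hp).continuousOn_mul c₁))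
      ((i₂.mul_continuousOn d₁).add ((h₁.intervalIntegrable hp).continuousOn_mul c₂))
    rw [e₁, e₂] at this
    simp only [zero_mul, sub_self] at this
    refine (intervalIntegral.integral_congr fun t _ => ?_).trans this
    ring
  rw [intervalIntegral.integral_const_mul] at e
  exact (mul_eq_zero.1 e).resolve_left (sub_ne_zero.2 hne)

/-- Duhamel's formula, obtained by integrating `sin (ω (x - t)) u'` and `cos (ω (x - t)) u` by parts. -/
theorem variation_of_constants (hp : IntervalIntegrable p volume 0 Real.pi)
    (h : RealSolution p ω u v) {x : ℝ} (hx : x ∈ Set.Icc 0 π) :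
    ω * u x = Real.sin (ω * x) + ∫ t in (0 : ℝ)..x, Real.sin (ω * (x - t)) * (p t * u t) := by
  have hsub : Set.Icc 0 x ⊆ Set.Icc 0 π := Set.Icc_subset_Icc_right hx.2
  have hsub' : Set.uIcc 0 x ⊆ Set.uIcc 0 π := by
    rwa [Set.uIcc_of_le hx.1, Set.uIcc_of_le pi_pos.le]
  have hu := h.continuousOn.mono hsub
  have hv := (h.continuousOn_deriv hp).mono hsub
  have iv : IntervalIntegrable v volume 0 x := hv.intervalIntegrable_of_Icc hx.1
  have iw := (h.intervalIntegrable hp).mono_set hsub'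
  have hlin : ∀ t, HasDerivAt (fun t => ω * (x - t)) (-ω) t := fun t => by
    simpa using ((hasDerivAt_id t).const_sub x).const_mul ω
  have hF1 : Continuous fun t => Real.cos (ω * (x - t)) * -ω := by fun_prop
  have hF2 : Continuous fun t => -Real.sin (ω * (x - t)) * -ω := by fun_prop
  have e₁ := integral_by_parts_primitive (f := fun t => Real.sin (ω * (x - t))) hx.1
    (hF1.intervalIntegrable 0 x) iw
    (fun t _ => by
      rw [intervalIntegral.integral_eq_sub_of_hasDerivAt (fun s _ => (hlin s).sin)
        (hF1.intervalIntegrable _ _)]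
      ring)
    (fun t ht => h.deriv_eq_integral t (hsub ht))
  have e₂ := integral_by_parts_primitive (f := fun t => Real.cos (ω * (x - t))) hx.1
    (hF2.intervalIntegrable 0 x) iv
    (fun t _ => by
      rw [intervalIntegral.integral_eq_sub_of_hasDerivAt (fun s _ => (hlin s).cos)
        (hF2.intervalIntegrable _ _)]
      ring)
    (fun t ht => h.eq_integral hp t (hsub ht))
  rw [← Set.uIcc_of_le hx.1] at hu hv
  have i₁ := ((hF1.intervalIntegrable 0 x).mul_continuousOn hv).add
    (iw.continuousOn_mul (g := fun t => Real.sin (ω * (x - t))) (by fun_prop))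
  have i₂ := ((hF2.intervalIntegrable 0 x).mul_continuousOn hu).add
    (iv.continuousOn_mul (g := fun t => Real.cos (ω * (x - t))) (by fun_prop))
  have := intervalIntegral.integral_add i₁ (i₂.const_mul ω)
  rw [intervalIntegral.integral_const_mul, e₁, e₂, h.zero, h.deriv_zero] at this
  simp only [sub_self, mul_zero, Real.sin_zero, Real.cos_zero, sub_zero] at this
  have key : ∫ t in (0 : ℝ)..x, Real.sin (ω * (x - t)) * (p t * u t)
      = -Real.sin (ω * x) + ω * u x := by
    trans
    · refine (intervalIntegral.integral_congr fun t _ => ?_).trans this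
      ring
    · ring
  rw [key]
  ring

/-- High-frequency asymptotics `ω u(x) = sin (ω x) + O(1/ω)`. At a maximum of `|u|`, Duhamel's
formula gives `ω max |u| ≤ 1 + π B max |u|`, hence `ω max |u| ≤ 2`; inserting this into the
integral term gives the claim. -/
theorem abs_sub_sin_le {B : ℝ} (hp : IntervalIntegrable p volume 0 Real.pi)
    (hB : ∀ x ∈ Set.Icc 0 Real.pi, |p x| ≤ B) (h : RealSolution p ω u v)
    (hω : 0 < ω) (hωB : 2 * π * B ≤ ω) {x : ℝ} (hx : x ∈ Set.Icc 0 π) :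
    |ω * u x - Real.sin (ω * x)| ≤ 2 * π * B / ω := by
  have hB0 : 0 ≤ B := (abs_nonneg _).trans (hB 0 ⟨le_rfl, pi_pos.le⟩)
  obtain ⟨x₀, hx₀, hmax⟩ := isCompact_Icc.exists_isMaxOn ⟨x, hx⟩ h.continuousOn.abs
  have hb : ∀ x ∈ Set.Icc 0 π, |ω * u x - Real.sin (ω * x)| ≤ B * |u x₀| * π := by
    intro x hx
    rw [h.variation_of_constants hp hx, add_sub_cancel_left, ← Real.norm_eq_abs]
    refine (intervalIntegral.norm_integral_le_of_norm_le_const (C := B * |u x₀|)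
      fun t ht => ?_).trans ?_
    · rw [Set.uIoc_of_le hx.1] at ht
      have ht' : t ∈ Set.Icc 0 π := ⟨ht.1.le, ht.2.trans hx.2⟩
      rw [norm_mul, norm_mul, Real.norm_eq_abs, Real.norm_eq_abs, Real.norm_eq_abs]
      calc _ ≤ 1 * (B * |u x₀|) :=
            mul_le_mul (Real.abs_sin_le_one _)
              (mul_le_mul (hB t ht') (hmax ht') (abs_nonneg _) hB0) (by positivity) zero_le_one
        _ = _ := one_mul _
    · rw [sub_zero, abs_of_nonneg hx.1]
      have := hx.2
      gcongr
  have h1 : ω * |u x₀| ≤ 2 := by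
    have h2 := hb x₀ hx₀
    have h3 : |ω * u x₀| ≤ 1 + B * |u x₀| * π := by
      have h4 := abs_sub_abs_le_abs_sub (ω * u x₀) (Real.sin (ω * x₀))
      have h5 := Real.abs_sin_le_one (ω * x₀)
      linarith
    rw [abs_mul, abs_of_pos hω] at h3
    have := mul_le_mul_of_nonneg_right hωB (abs_nonneg (u x₀))
    linarith
  refine (hb x hx).trans ?_
  rw [le_div_iff₀ hω]
  have := mul_le_mul_of_nonneg_left h1 (by positivity : 0 ≤ B * π)
  linarith

theorem exists_ne_zero (h : RealSolution p ω u v) : ∃ x ∈ Set.Icc 0 π, u x ≠ 0 := by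
  by_contra! hu
  have h0 : (0 : ℝ) ∈ Set.Icc 0 π := ⟨le_rfl, pi_pos.le⟩
  have h1 := h.hasDeriv 0 h0
  have h2 : HasDerivWithinAt u 0 (Set.Icc 0 π) 0 :=
    (hasDerivWithinAt_const (0 : ℝ) _ (0 : ℝ)).congr hu (hu 0 h0)
  have := (uniqueDiffOn_Icc pi_pos 0 h0).eq_deriv _ h1 h2
  rw [h.deriv_zero] at this
  exact one_ne_zero this

theorem integral_sq_pos (h : RealSolution p ω u v) : 0 < ∫ t in (0 : ℝ)..π, u t ^ 2 := by
  obtain ⟨x, hx, hne⟩ := h.exists_ne_zero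
  exact intervalIntegral.integral_pos pi_pos (h.continuousOn.pow 2) (fun t _ => sq_nonneg _)
    ⟨x, hx, by positivity⟩

end RealSolution

/-! ### Enumerating a locally finite symmetric set -/

/-- If `Z` has exactly one element `ζ n` near each integer `n ≥ N`, then any increasing enumeration
`z` of `Z` is eventually a shift of `ζ`, so `z n - n` stays bounded as `n → ∞`. -/
theorem enum_tail {Z : Set ℝ} {N : ℤ} {ζ : ℤ → ℝ}
    (hZ : ∀ n ≥ N, ζ n ∈ Z ∧ |ζ n - n| ≤ 1 / 4 ∧ ∀ x ∈ Z, |x - n| ≤ 1 / 2 → x = ζ n)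
    {z : ℤ → ℝ} (hz : StrictMono z) (hmem : ∀ n, z n ∈ Z) (hsurj : ∀ x ∈ Z, ∃ n, z n = x) :
    ∃ (k : ℤ) (C : ℝ), ∀ n ≥ k, |z n - n| ≤ C := by
  obtain ⟨k, hk⟩ := hsurj _ (hZ N le_rfl).1
  have hζ : ∀ m n, N ≤ m → N ≤ n → m < n → ζ m < ζ n := by
    intro m n hm hn hmn
    have h1 := abs_le.1 (hZ m hm).2.1
    have h2 := abs_le.1 (hZ n hn).2.1
    have h3 : (m : ℝ) + 1 ≤ n := by exact_mod_cast hmn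
    linarith [h1.2, h2.1]
  have main : ∀ j : ℕ, z (k + j) = ζ (N + j) := by
    intro j
    induction j with
    | zero => simpa using hk
    | succ j ih =>
      obtain ⟨i, hi⟩ := hsurj _ (hZ (N + (j + 1 : ℕ)) (by lia)).1
      have h1 : k + j < i := by
        rw [← hz.lt_iff_lt, ih, hi]
        exact hζ _ _ (by lia) (by lia) (by push_cast; lia)
      rcases (show k + (j + 1 : ℕ) ≤ i by push_cast; lia).eq_or_lt with h2 | h2
      · rw [h2, hi]
      exfalso
      -- a zero strictly between `ζ (N + j)` and `ζ (N + j + 1)` would round to an integer in between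
      have h3 : ζ (N + j) < z (k + (j + 1 : ℕ)) := by rw [← ih]; apply hz; push_cast; lia
      have h4 : z (k + (j + 1 : ℕ)) < ζ (N + (j + 1 : ℕ)) := by rw [← hi]; exact hz h2
      set w := z (k + (j + 1 : ℕ)) with hw
      have hr : |w - round w| ≤ 1 / 2 := abs_sub_round w
      have h5 := abs_le.1 (hZ (N + j) (by lia)).2.1
      have hN : N ≤ round w := by
        have hh := (abs_le.1 hr).2
        push_cast at h5
        have : ((N + j : ℤ) : ℝ) < round w + 1 := by push_cast; linarith [h5.1]
        have : N + j < round w + 1 := by exact_mod_cast this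
        lia
      have h6 := (hZ _ hN).2.2 w (hmem _) hr
      rcases le_or_gt (round w) (N + j) with h7 | h7
      · rcases h7.eq_or_lt with h7 | h7
        · rw [h7] at h6; linarith
        · have := hζ _ _ hN (by lia) h7; linarith
      · rcases (show N + (j + 1 : ℕ) ≤ round w by push_cast; lia).eq_or_lt with h8 | h8
        · rw [← h8] at h6; linarith
        · have := hζ _ _ (by lia) hN h8; linarith
  refine ⟨k, 1 / 4 + |(N : ℝ) - k|, fun n hn => ?_⟩
  obtain ⟨j, hj⟩ := Int.eq_ofNat_of_zero_le (sub_nonneg.2 hn)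
  have hn' : n = k + j := by lia
  have h1 := (hZ (N + j) (by lia)).2.1
  rw [hn', main j]
  calc |ζ (N + j) - ((k + j : ℤ) : ℝ)| = |(ζ (N + j) - ((N + j : ℤ) : ℝ)) + ((N : ℝ) - k)| := by
        congr 1; push_cast; ring
    _ ≤ _ := (abs_add_le _ _).trans (by gcongr)

/-- A symmetric, locally finite set with exactly one element near each large integer has an
increasing enumeration over `ℤ` at bounded distance from the identity. -/
theorem exists_enumeration {Z : Set ℝ} (hsymm : ∀ x ∈ Z, -x ∈ Z)
    (hfin : ∀ a b : ℝ, (Z ∩ Set.Icc a b).Finite) {N : ℤ}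
    (hZ : ∀ n ≥ N, ∃ ζ ∈ Z, |ζ - n| ≤ 1 / 4 ∧ ∀ x ∈ Z, |x - n| ≤ 1 / 2 → x = ζ) :
    ∃ z : ℤ → ℝ, StrictMono z ∧ (∀ n, z n ∈ Z) ∧ (∀ x ∈ Z, ∃ n, z n = x) ∧
      ∃ C > (0 : ℝ), ∀ n : ℤ, |z n - n| ≤ C := by
  have hlarge : ∀ x : ℝ, ∃ w ∈ Z, x < w := by
    intro x
    obtain ⟨ζ, h1, h2, -⟩ := hZ (max N (⌈x⌉ + 1)) (le_max_left _ _)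
    refine ⟨ζ, h1, ?_⟩
    have h3 : ((⌈x⌉ + 1 : ℤ) : ℝ) ≤ (max N (⌈x⌉ + 1) : ℤ) := by exact_mod_cast le_max_right _ _
    have h4 := Int.le_ceil x
    push_cast at h3 h2
    linarith [(abs_le.1 h2).1]
  have : Nonempty Z := let ⟨w, hw, _⟩ := hlarge 0; ⟨⟨w, hw⟩⟩
  have : NoMaxOrder Z := ⟨fun x => let ⟨w, hw, h⟩ := hlarge x; ⟨⟨w, hw⟩, h⟩⟩
  have : NoMinOrder Z := ⟨fun x => let ⟨w, hw, h⟩ := hlarge (-x); ⟨⟨-w, hsymm w hw⟩, by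
    change -w < (x : ℝ); linarith⟩⟩
  let : LocallyFiniteOrder Z := LocallyFiniteOrder.ofFiniteIcc fun a b => by
    refine Set.Finite.of_finite_image ((hfin a b).subset ?_) Subtype.val_injective.injOn
    rintro _ ⟨x, hx, rfl⟩
    exact ⟨x.2, hx.1, hx.2⟩
  let : SuccOrder Z := LinearLocallyFiniteOrder.succOrder Z
  let : PredOrder Z := LinearLocallyFiniteOrder.predOrder Z
  let e : ℤ ≃o Z := (orderIsoIntOfLinearSuccPredArch (ι := Z)).symm
  have hz : StrictMono fun n => (e n : ℝ) := fun m n h => e.strictMono h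
  have hs : ∀ x ∈ Z, ∃ n, (e n : ℝ) = x := fun x hx => ⟨e.symm ⟨x, hx⟩, by simp⟩
  refine ⟨fun n => e n, hz, fun n => (e n).2, hs, ?_⟩
  choose! ζ hζ using hZ
  obtain ⟨k, C, hC⟩ := enum_tail hζ hz (fun n => (e n).2) hs
  -- the reflected enumeration controls the negative indices
  obtain ⟨k', C', hC'⟩ := enum_tail (z := fun n => -(e (-n) : ℝ)) hζ
    (fun m n h => neg_lt_neg (hz (neg_lt_neg h))) (fun n => hsymm _ (e (-n)).2)
    (fun x hx => let ⟨n, hn⟩ := hs _ (hsymm x hx); ⟨-n, by simp [hn]⟩)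
  obtain ⟨D, hD⟩ := ((Set.finite_Icc (-k') k).image fun n : ℤ => |(e n : ℝ) - n|).bddAbove
  refine ⟨max (max C C') (max D 1), by positivity, fun n => ?_⟩
  rcases le_or_gt k n with h | h
  · exact (hC n h).trans (by simp)
  rcases le_or_gt n (-k') with h' | h'
  · have := hC' (-n) (by lia)
    rw [neg_neg, Int.cast_neg, neg_sub_neg, abs_sub_comm] at this
    exact this.trans (by simp)
  · exact (hD ⟨n, ⟨h'.le, h.le⟩, rfl⟩).trans (by simp)

/-! ### Location of the zeros -/

open Filter Topology in
/-- Real solutions depend continuously on `ω`, uniformly on `[0,π]`. -/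
theorem eventually_abs_sub_le {p : ℝ → ℝ} {B : ℝ}
    (hp : IntervalIntegrable p volume 0 Real.pi) (hB : ∀ x ∈ Set.Icc 0 Real.pi, |p x| ≤ B)
    {y yd : ℂ → ℝ → ℂ} (hy : ∀ ω : ℂ, IsSLSolution p ω (y ω) (yd ω)) (ω₀ : ℝ) {η : ℝ}
    (hη : 0 < η) :
    ∀ᶠ a : ℝ in 𝓝 ω₀, ∀ x ∈ Set.Icc 0 Real.pi, |(y a x).re - (y ω₀ x).re| ≤ η := by
  obtain ⟨L, hL⟩ := norm_sub_le_of_isSLSolution hp hB (hy ω₀) (‖(ω₀ : ℂ) ^ 2‖ + 1)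
  have c1 : Continuous fun a : ℝ => ‖(a : ℂ) ^ 2‖ := by fun_prop
  have c2 : Continuous fun a : ℝ => L * ‖(a : ℂ) ^ 2 - (ω₀ : ℂ) ^ 2‖ := by fun_prop
  have h1 := (c1.tendsto ω₀).eventually (gt_mem_nhds (lt_add_one _))
  have h2 := (c2.tendsto ω₀).eventually (gt_mem_nhds (show _ < η by simpa using hη))
  filter_upwards [h1, h2] with a h1 h2 x hx
  rw [← Complex.sub_re]
  exact (Complex.abs_re_le_norm _).trans ((hL a _ _ (hy a) h1.le x hx).trans h2.le)

/-- Two functions that are both uniformly `η`-close to `h` can be orthogonal only if `∫ h²` is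
small. Contrapositively, eigenfunctions with nearby parameters are not orthogonal. -/
theorem integral_sq_le_of_integral_mul_eq_zero {f g h : ℝ → ℝ} {η M : ℝ}
    (hf : ContinuousOn f (Set.Icc 0 Real.pi)) (hg : ContinuousOn g (Set.Icc 0 Real.pi))
    (hh : ContinuousOn h (Set.Icc 0 Real.pi)) (h0 : ∫ t in (0 : ℝ)..Real.pi, f t * g t = 0)
    (hη : η ≤ 1) (hM : ∀ x ∈ Set.Icc 0 Real.pi, |h x| ≤ M)
    (hfh : ∀ x ∈ Set.Icc 0 Real.pi, |f x - h x| ≤ η)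
    (hgh : ∀ x ∈ Set.Icc 0 Real.pi, |g x - h x| ≤ η) :
    ∫ t in (0 : ℝ)..Real.pi, h t ^ 2 ≤ η * (2 * M + 1) * Real.pi := by
  have i1 : IntervalIntegrable (fun t => h t ^ 2) volume 0 Real.pi :=
    (hh.pow 2).intervalIntegrable_of_Icc pi_pos.le
  have i2 : IntervalIntegrable (fun t => f t * g t) volume 0 Real.pi :=
    (hf.mul hg).intervalIntegrable_of_Icc pi_pos.le
  have e := intervalIntegral.integral_sub i1 i2
  rw [h0, sub_zero] at e
  rw [← e]
  refine (Real.le_norm_self _).trans ((intervalIntegral.norm_integral_le_of_norm_le_const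
    (C := η * (2 * M + 1)) fun t ht => ?_).trans ?_)
  · rw [Set.uIoc_of_le pi_pos.le] at ht
    have ht' : t ∈ Set.Icc 0 Real.pi := ⟨ht.1.le, ht.2⟩
    have h1 := hM t ht'
    have h2 := hfh t ht'
    have h3 := hgh t ht'
    have hM0 := (abs_nonneg _).trans h1
    have hη0 := (abs_nonneg _).trans h2
    rw [Real.norm_eq_abs, abs_sub_comm]
    calc |f t * g t - h t ^ 2|
        = |(f t - h t) * (g t - h t) + (f t - h t) * h t + h t * (g t - h t)| := by
          congr 1; ring
      _ ≤ |f t - h t| * |g t - h t| + |f t - h t| * |h t| + |h t| * |g t - h t| := by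
          refine (abs_add_three _ _ _).trans ?_
          simp only [abs_mul, le_refl]
      _ ≤ η * 1 + η * M + M * η := by
          gcongr
          exact h3.trans hη
      _ = _ := by ring
  · rw [sub_zero, abs_of_pos pi_pos]

open Filter Topology in
/-- The zeros do not accumulate at `ω₀`: two zeros `a`, `b` near `ω₀` with `a² ≠ b²` would have
orthogonal eigenfunctions, both close to the nonzero solution at `ω₀`. -/
theorem exists_nhds_zeros_finite {p : ℝ → ℝ} {B : ℝ}
    (hp : IntervalIntegrable p volume 0 Real.pi) (hB : ∀ x ∈ Set.Icc 0 Real.pi, |p x| ≤ B)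
    {y yd : ℂ → ℝ → ℂ} (hy : ∀ ω : ℂ, IsSLSolution p ω (y ω) (yd ω)) (ω₀ : ℝ) :
    ∃ s ∈ 𝓝 ω₀, ({x : ℝ | y x Real.pi = 0} ∩ s).Finite := by
  have hR := fun ω : ℝ => (hy ω).realSolution hp hB
  obtain ⟨M, hM⟩ := isCompact_Icc.exists_bound_of_continuousOn (hR ω₀).continuousOn
  have hM0 : 0 ≤ M := (norm_nonneg _).trans (hM 0 ⟨le_rfl, pi_pos.le⟩)
  set c := ∫ t in (0 : ℝ)..Real.pi, (y ω₀ t).re ^ 2 with hc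
  have hc0 : 0 < c := (hR ω₀).integral_sq_pos
  set η := min 1 (c / (2 * ((2 * M + 1) * Real.pi))) with hη
  have hη0 : 0 < η := by have := pi_pos; positivity
  refine ⟨_, eventually_abs_sub_le hp hB hy ω₀ hη0, ?_⟩
  rcases Set.eq_empty_or_nonempty ({x : ℝ | y x Real.pi = 0} ∩
    {a : ℝ | ∀ x ∈ Set.Icc 0 Real.pi, |(y a x).re - (y ω₀ x).re| ≤ η}) with he | ⟨a, ha0, ha⟩
  · rw [he]; exact Set.finite_empty
  refine (Set.toFinite {a, -a}).subset ?_
  rintro b ⟨hb0, hb⟩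
  rw [Set.mem_insert_iff, Set.mem_singleton_iff, ← sq_eq_sq_iff_eq_or_eq_neg]
  by_contra hne
  rw [Set.mem_ofPred_eq] at ha0 hb0
  have horth := RealSolution.integral_mul_eq_zero hp (hR b) (hR a) hne
    (by simp [hb0]) (by simp [ha0])
  have h1 := integral_sq_le_of_integral_mul_eq_zero (hR b).continuousOn (hR a).continuousOn
    (hR ω₀).continuousOn horth (min_le_left _ _) hM hb ha
  rw [← hc] at h1
  have h2 : η * (2 * M + 1) * Real.pi ≤ c / 2 := by
    have h3 : η ≤ c / (2 * ((2 * M + 1) * Real.pi)) := min_le_right _ _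
    rw [le_div_iff₀ (by have := pi_pos; positivity)] at h3
    linarith
  linarith

theorem zeros_inter_Icc_finite {p : ℝ → ℝ} {B : ℝ}
    (hp : IntervalIntegrable p volume 0 Real.pi) (hB : ∀ x ∈ Set.Icc 0 Real.pi, |p x| ≤ B)
    {y yd : ℂ → ℝ → ℂ} (hy : ∀ ω : ℂ, IsSLSolution p ω (y ω) (yd ω)) (a b : ℝ) :
    ({x : ℝ | y x Real.pi = 0} ∩ Set.Icc a b).Finite := by
  refine isCompact_Icc.induction_on (p := fun s => ({x : ℝ | y x Real.pi = 0} ∩ s).Finite)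
    (by simp) (fun s t hst ht => ht.subset (Set.inter_subset_inter_right _ hst))
    (fun s t hs ht => by rw [Set.inter_union_distrib_left]; exact hs.union ht)
    (fun x _ => ?_)
  obtain ⟨s, hs, hfin⟩ := exists_nhds_zeros_finite hp hB hy x
  exact ⟨s, mem_nhdsWithin_of_mem_nhds hs, hfin⟩

/-- For `n` large there is exactly one zero within `1/2` of `n`. Since `ω y(π;ω)` is close to
`sin (ω π)`, it changes sign between `n - 1/2` and `n + 1/2`, and every zero in that interval is
very close to `n`. Two such zeros would have orthogonal eigenfunctions both close to
`sin (n x) / n`, which is impossible since `∫₀^π sin² (n x) = π / 2`. -/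
theorem exists_unique_zero_near {p : ℝ → ℝ} {B : ℝ} (hB1 : 1 ≤ B)
    (hp : IntervalIntegrable p volume 0 Real.pi) (hB : ∀ x ∈ Set.Icc 0 Real.pi, |p x| ≤ B)
    {y yd : ℂ → ℝ → ℂ} (hy : ∀ ω : ℂ, IsSLSolution p ω (y ω) (yd ω)) {n : ℤ}
    (hn : 140 * B + 1 ≤ n) :
    ∃ ζ ∈ {x : ℝ | y x Real.pi = 0}, |ζ - n| ≤ 1 / 4 ∧
      ∀ x ∈ {x : ℝ | y x Real.pi = 0}, |x - n| ≤ 1 / 2 → x = ζ := by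
  have hR := fun ω : ℝ => (hy ω).realSolution hp hB
  have hπ := pi_pos
  have hπ2 := Real.pi_lt_d2
  have hpos : ∀ a : ℝ, |a - n| ≤ 1 / 2 → 140 * B ≤ a := fun a ha => by
    linarith [(abs_le.1 ha).1]
  have hasym : ∀ a : ℝ, |a - n| ≤ 1 / 2 → ∀ x ∈ Set.Icc 0 Real.pi,
      |a * (y a x).re - Real.sin (a * x)| ≤ 1 / 20 := by
    intro a ha x hx
    have h1 := hpos a ha
    have h2 : 0 < a := by linarith
    refine ((hR a).abs_sub_sin_le hp hB h2 (by nlinarith) hx).trans ?_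
    rw [div_le_iff₀ h2]
    nlinarith
  have hloc : ∀ a : ℝ, |a - n| ≤ 1 / 2 → y a Real.pi = 0 → |a - n| ≤ 1 / 40 := by
    intro a ha h0
    have h1 := hasym a ha Real.pi ⟨hπ.le, le_rfl⟩
    rw [h0, Complex.zero_re, mul_zero, zero_sub, abs_neg,
      show a * Real.pi = (a - n) * Real.pi + n * Real.pi by ring, Real.sin_add_int_mul_pi,
      abs_mul, abs_neg_one_zpow, one_mul] at h1
    have h2 := Real.mul_abs_le_abs_sin (x := (a - n) * Real.pi) (by
      rw [abs_mul, abs_of_pos hπ]; nlinarith)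
    rw [abs_mul, abs_of_pos hπ, show 2 / Real.pi * (|a - n| * Real.pi) = 2 * |a - n| by
      field_simp] at h2
    linarith
  have hsin : ∀ a : ℝ, |a - n| ≤ 1 / 2 → y a Real.pi = 0 → ∀ x ∈ Set.Icc 0 Real.pi,
      |a * (y a x).re - Real.sin (n * x)| ≤ 1 / 7 := by
    intro a ha h0 x hx
    have h1 := hasym a ha x hx
    have h2 : |Real.sin (a * x) - Real.sin (n * x)| ≤ |a * x - n * x| :=
      Real.abs_sin_sub_sin_le _ _
    rw [← sub_mul, abs_mul, abs_of_nonneg hx.1] at h2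
    have h3 : |a - n| * x ≤ 1 / 40 * Real.pi :=
      mul_le_mul (hloc a ha h0) hx.2 hx.1 (by norm_num)
    have h4 := abs_sub_le (a * (y a x).re) (Real.sin (a * x)) (Real.sin (n * x))
    linarith
  have huniq : ∀ a b : ℝ, |a - n| ≤ 1 / 2 → |b - n| ≤ 1 / 2 → y a Real.pi = 0 →
      y b Real.pi = 0 → a = b := by
    intro a b ha hb ha0 hb0
    have ha1 := hpos a ha
    have hb1 := hpos b hb
    by_contra hne
    have hne' : a ^ 2 ≠ b ^ 2 := fun h => hne
      ((sq_eq_sq₀ (by linarith) (by linarith)).1 h)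
    have horth := RealSolution.integral_mul_eq_zero hp (hR a) (hR b) hne'
      (by simp [ha0]) (by simp [hb0])
    have horth' : ∫ t in (0 : ℝ)..Real.pi, a * (y a t).re * (b * (y b t).re) = 0 := by
      have h := congrArg (a * b * ·) horth
      simp only [mul_zero] at h
      rw [← intervalIntegral.integral_const_mul] at h
      refine (intervalIntegral.integral_congr fun t _ => ?_).trans h
      ring
    have h1 := integral_sq_le_of_integral_mul_eq_zero (h := fun t => Real.sin (n * t)) (M := 1)
      (continuousOn_const.mul (hR a).continuousOn) (continuousOn_const.mul (hR b).continuousOn)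
      (by fun_prop) horth' (by norm_num) (fun x _ => Real.abs_sin_le_one _)
      (hsin a ha ha0) (hsin b hb hb0)
    have hn0 : (n : ℝ) ≠ 0 := by linarith
    have h2 : ∫ t in (0 : ℝ)..Real.pi, Real.sin (n * t) ^ 2 = Real.pi / 2 := by
      rw [intervalIntegral.integral_comp_mul_left (fun t => Real.sin t ^ 2) hn0, integral_sin_sq]
      simp [Real.sin_int_mul_pi]
      field_simp
    rw [h2] at h1
    linarith
  -- at `n ± 1/2` the leading term `sin (ω π)` equals `± (-1) ^ n`, so the solution changes sign
  obtain ⟨s, hs, hs1⟩ : ∃ s : ℝ, (-1 : ℝ) ^ n = s ∧ (s = 1 ∨ s = -1) :=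
    ⟨_, rfl, by rcases Int.even_or_odd n with h | h <;> simp [h.neg_one_zpow]⟩
  have hcont : Continuous fun a : ℝ => s * (y a Real.pi).re := by
    refine continuous_const.mul (continuous_iff_continuousAt.2 fun ω₀ => ?_)
    refine Metric.continuousAt_iff'.2 fun ε hε => ?_
    filter_upwards [eventually_abs_sub_le hp hB hy ω₀ (half_pos hε)] with a ha
    rw [Real.dist_eq]
    linarith [ha Real.pi ⟨hπ.le, le_rfl⟩]
  have h1 := hasym (n + 1 / 2) (by norm_num) Real.pi ⟨hπ.le, le_rfl⟩
  have h2 := hasym (n - 1 / 2) (by norm_num) Real.pi ⟨hπ.le, le_rfl⟩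
  rw [show ((n : ℝ) + 1 / 2) * Real.pi = Real.pi / 2 + n * Real.pi by ring,
    Real.sin_add_int_mul_pi, Real.sin_pi_div_two, hs, abs_le] at h1
  rw [show ((n : ℝ) - 1 / 2) * Real.pi = -(Real.pi / 2) + n * Real.pi by ring,
    Real.sin_add_int_mul_pi, Real.sin_neg, Real.sin_pi_div_two, hs, abs_le] at h2
  have hp1 : 0 ≤ s * (y ((n + 1 / 2 : ℝ) : ℂ) Real.pi).re := by
    refine nonneg_of_mul_nonneg_right (a := (n : ℝ) + 1 / 2) ?_ (by linarith)
    rcases hs1 with rfl | rfl <;> linarith [h1.1, h1.2]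
  have hp2 : s * (y ((n - 1 / 2 : ℝ) : ℂ) Real.pi).re ≤ 0 := by
    refine nonpos_of_mul_nonpos_right (a := (n : ℝ) - 1 / 2) ?_ (by linarith)
    rcases hs1 with rfl | rfl <;> linarith [h2.1, h2.2]
  obtain ⟨ζ, hζ, h0⟩ := intermediate_value_Icc (by linarith : (n : ℝ) - 1 / 2 ≤ n + 1 / 2)
    hcont.continuousOn ⟨hp2, hp1⟩
  have hζn : |ζ - n| ≤ 1 / 2 := abs_le.2 ⟨by linarith [hζ.1], by linarith [hζ.2]⟩
  have hζ0 : y ζ Real.pi = 0 := by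
    have hs0 : s ≠ 0 := by rcases hs1 with rfl | rfl <;> norm_num
    rw [← (hy ζ).ofReal_re hp hB Real.pi ⟨hπ.le, le_rfl⟩, (mul_eq_zero.1 h0).resolve_left hs0,
      Complex.ofReal_zero]
  exact ⟨ζ, hζ0, (hloc ζ hζn hζ0).trans (by norm_num),
    fun x hx0 hx => huniq x ζ hx hζn hx0 hζ0⟩

/-- **Counting lemma.**  For an integrable bounded potential `p` on `[0,π]`, the real
zeros of `ω ↦ y(π;ω)` can be listed in increasing order as a two-sided sequence
`(z n)` over `n : ℤ` whose listed set is symmetric about `0`, and this sequence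
satisfies `z n = n + O(1)`: there is `C > 0` with `|z n - n| ≤ C` for all `n : ℤ`. -/
theorem sl_zero_counting
    (p : ℝ → ℝ)
    (hp_int : IntegrableOn p (Set.Icc (0 : ℝ) Real.pi))
    (hp_bdd : ∃ B : ℝ, ∀ x ∈ Set.Icc (0 : ℝ) Real.pi, |p x| ≤ B)
    (y yd : ℂ → ℝ → ℂ)
    (hy : ∀ ω : ℂ, IsSLSolution p ω (y ω) (yd ω)) :
    ∃ z : ℤ → ℝ, StrictMono z ∧
      (∀ n : ℤ, y ((z n : ℝ) : ℂ) Real.pi = 0) ∧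
      (∀ x : ℝ, y ((x : ℝ) : ℂ) Real.pi = 0 → ∃ n : ℤ, z n = x) ∧
      (∀ n : ℤ, ∃ m : ℤ, z m = -z n) ∧
      ∃ C > (0 : ℝ), ∀ n : ℤ, |z n - (n : ℝ)| ≤ C := by
  obtain ⟨B₀, hB₀⟩ := hp_bdd
  have hp : IntervalIntegrable p volume 0 Real.pi :=
    (intervalIntegrable_iff_integrableOn_Icc_of_le pi_pos.le).2 hp_int
  have hB : ∀ x ∈ Set.Icc 0 Real.pi, |p x| ≤ max B₀ 1 :=
    fun x hx => (hB₀ x hx).trans (le_max_left _ _)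
  have hsymm : ∀ x ∈ {x : ℝ | y x Real.pi = 0}, -x ∈ {x : ℝ | y x Real.pi = 0} := by
    intro x hx
    rw [Set.mem_ofPred_eq] at hx ⊢
    rw [← hx]
    exact eqOn_of_isSLSolution hp hB (by push_cast; ring) (hy _) (hy x) ⟨pi_pos.le, le_rfl⟩
  obtain ⟨z, hz, hmem, hsurj, hC⟩ := exists_enumeration hsymm
    (zeros_inter_Icc_finite hp hB hy) (N := ⌈140 * max B₀ 1 + 1⌉)
    (fun n hn => exists_unique_zero_near (le_max_right _ _) hp hB hy
      ((Int.le_ceil _).trans (by exact_mod_cast hn)))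
  exact ⟨z, hz, hmem, hsurj, fun n => hsurj _ (hsymm _ (hmem n)), hC⟩
end
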